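/- Let m, n be positive integers and E ⊂ ℝⁿ a finite set. Let (P^x)_{x∈E} be a family of polynomials of degree at most m−1 and let M > 0. Suppose that P^x ∈ Γ'*(x, M) for all x ∈ E, and that |∂^β(P^x − P^y)(x)| ≤ M|x − y|^{m−|β|} for all x, y ∈ E and |β| ≤ m−1. Then there exist a constant C depending only on m, n and a function F ∈ C^{m-1,1}(ℝⁿ) such that J_x(F) = P^x for all x ∈ E and ‖F‖_{C^{m-1,1}(ℝⁿ)} ≤ CM; moreover F can be taken nonnegative on ℝⁿ. -/

import Mathlib

open scoped BigOperators

noncomputable section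

abbrev Euc (n : ℕ) : Type := EuclideanSpace ℝ (Fin n)
abbrev MPoly (n : ℕ) : Type := MvPolynomial (Fin n) ℝ

/-- Partial derivative in the `i`-th coordinate direction. -/
noncomputable def pD {n : ℕ} (i : Fin n) (F : Euc n → ℝ) : Euc n → ℝ :=
  fun x => fderiv ℝ F x (EuclideanSpace.single i (1 : ℝ))

/-- The multi-index partial derivative `∂^α F`. -/
noncomputable def mD {n : ℕ} (α : Fin n → ℕ) (F : Euc n → ℝ) : Euc n → ℝ :=
  (((List.finRange n).flatMap fun i => List.replicate (α i) i)).foldr pD F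

/-- Partial derivative within a set. -/
noncomputable def pDW {n : ℕ} (s : Set (Euc n)) (i : Fin n) (F : Euc n → ℝ) : Euc n → ℝ :=
  fun x => fderivWithin ℝ F s x (EuclideanSpace.single i (1 : ℝ))

/-- Multi-index partial derivative within a set. -/
noncomputable def mDW {n : ℕ} (s : Set (Euc n)) (α : Fin n → ℕ) (F : Euc n → ℝ) : Euc n → ℝ :=
  (((List.finRange n).flatMap fun i => List.replicate (α i) i)).foldr (pDW s) F

/-- The order `|α|` of a multi-index. -/
def deg {n : ℕ} (α : Fin n → ℕ) : ℕ := ∑ i, α i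

/-- Evaluation of an `n`-variable polynomial at a point of `ℝⁿ`. -/
noncomputable def peval {n : ℕ} (P : MPoly n) (x : Euc n) : ℝ :=
  MvPolynomial.eval (fun i => x i) P

/-- `F ∈ C^m(ℝⁿ)` with `‖F‖_{C^m(ℝⁿ)} ≤ M`. -/
def CmNormLe (m n : ℕ) (F : Euc n → ℝ) (M : ℝ) : Prop :=
  ContDiff ℝ (m : ℕ∞) F ∧ ∀ α : Fin n → ℕ, deg α ≤ m → ∀ x : Euc n, |mD α F x| ≤ M

/-- `F ∈ C^{m-1,1}(ℝⁿ)` with `‖F‖_{C^{m-1,1}(ℝⁿ)} ≤ M`. -/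
def CmLipNormLe (m n : ℕ) (F : Euc n → ℝ) (M : ℝ) : Prop :=
  ContDiff ℝ ((m - 1 : ℕ) : ℕ∞) F ∧
  (∀ α : Fin n → ℕ, deg α ≤ m - 1 → ∀ x : Euc n, |mD α F x| ≤ M) ∧
  (∀ α : Fin n → ℕ, deg α = m - 1 → ∀ i : Fin n, ∀ x : Euc n, ∀ t : ℝ,
    |mD α F (x + t • EuclideanSpace.single i (1 : ℝ)) - mD α F x| ≤ M * |t|)

/-- `J_x(F) = P`, i.e. `P` is the `(m-1)`-st order Taylor polynomial of `F` at `x`. -/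
def IsJetAt (m n : ℕ) (F : Euc n → ℝ) (x : Euc n) (P : MPoly n) : Prop :=
  P.totalDegree ≤ m - 1 ∧
  ∀ α : Fin n → ℕ, deg α ≤ m - 1 → mD α (peval P) x = mD α F x

/-- `J_x^+(F) = P`, i.e. `P` is the `m`-th order Taylor polynomial of `F` at `x`. -/
def IsJetPlusAt (m n : ℕ) (F : Euc n → ℝ) (x : Euc n) (P : MPoly n) : Prop :=
  P.totalDegree ≤ m ∧
  ∀ α : Fin n → ℕ, deg α ≤ m → mD α (peval P) x = mD α F x

/-- Truncation of a polynomial: keep the monomials of total degree `≤ d`. -/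
noncomputable def truncLE {n : ℕ} (d : ℕ) (P : MPoly n) : MPoly n :=
  ∑ s ∈ P.support.filter (fun s => (s.sum fun _ e => e) ≤ d),
    MvPolynomial.monomial s (P.coeff s)

/-- Substitution `y ↦ y + v` in a polynomial. -/
noncomputable def polyShift {n : ℕ} (v : Fin n → ℝ) (P : MPoly n) : MPoly n :=
  MvPolynomial.aeval (fun i => (MvPolynomial.X i + MvPolynomial.C (v i) : MPoly n)) P

/-- The `(m-1)`-st order Taylor polynomial of a polynomial `P` at `x`. -/
noncomputable def jetTrunc (m n : ℕ) (x : Euc n) (P : MPoly n) : MPoly n :=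
  polyShift (fun i => -(x i)) (truncLE (m - 1) (polyShift (fun i => x i) P))

/-- Multiplication of `(m-1)`-jets at `x`: `P ⊙_x Q = J_x(PQ)`. -/
noncomputable def jmul (m n : ℕ) (x : Euc n) (P Q : MPoly n) : MPoly n :=
  jetTrunc m n x (P * Q)

/-- `Γ*(x,M)`. -/
def GammaStar (m n : ℕ) (x : Euc n) (M : ℝ) : Set (MPoly n) :=
  {P | ∃ F : Euc n → ℝ, CmNormLe m n F M ∧ (∀ y, 0 ≤ F y) ∧ IsJetAt m n F x P}

/-- `Γ_f(x,M)`. -/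
def GammaF (m n : ℕ) (f : Euc n → ℝ) (x : Euc n) (M : ℝ) : Set (MPoly n) :=
  {P ∈ GammaStar m n x M | peval P x = f x}

/-- `Γ'*(x,M)` (the `C^{m-1,1}` version). -/
def GammaStar' (m n : ℕ) (x : Euc n) (M : ℝ) : Set (MPoly n) :=
  {P | ∃ F : Euc n → ℝ, CmLipNormLe m n F M ∧ (∀ y, 0 ≤ F y) ∧ IsJetAt m n F x P}

/-- `Γ'_f(x,M)`. -/
def GammaF' (m n : ℕ) (f : Euc n → ℝ) (x : Euc n) (M : ℝ) : Set (MPoly n) :=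
  {P ∈ GammaStar' m n x M | peval P x = f x}

/-- `Γ₀⁺`. -/
def Gamma0plus (m n : ℕ) : Set (MPoly n) :=
  {P | P.totalDegree ≤ m ∧
    (∀ β : Fin n → ℕ, deg β ≤ m → |mD β (peval P) 0| ≤ 1) ∧
    (∀ x : Euc n, 0 ≤ peval P x + ‖x‖ ^ m) ∧
    (∀ ε : ℝ, 0 < ε → ∃ δ : ℝ, 0 < δ ∧ ∀ x : Euc n, ‖x‖ ≤ δ → 0 ≤ peval P x + ε * ‖x‖ ^ m)}

/-- `Γ̃₀'`. -/
def GammaTilde0' (m n : ℕ) : Set (MPoly n) :=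
  {P | P.totalDegree ≤ m - 1 ∧
    (∀ β : Fin n → ℕ, deg β ≤ m - 1 → |mD β (peval P) 0| ≤ 1) ∧
    ∀ x : Euc n, 0 ≤ peval P x + ‖x‖ ^ m}

/-- The closed axis-parallel cube with center `c` and sidelength `δ`. -/
def cube {n : ℕ} (c : Euc n) (δ : ℝ) : Set (Euc n) :=
  {y | ∀ i, |y i - c i| ≤ δ / 2}

/-- `F ∈ C^{m-1,1}(Q)` with `‖F‖_{C^{m-1,1}(Q)} ≤ M`, for the cube `Q` of center `c`,
sidelength `δ`. -/
def CmLipOnCubeLe (m n : ℕ) (c : Euc n) (δ : ℝ) (F : Euc n → ℝ) (M : ℝ) : Prop :=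
  ContDiffOn ℝ ((m - 1 : ℕ) : ℕ∞) F (cube c δ) ∧
  (∀ α : Fin n → ℕ, deg α ≤ m - 1 → ∀ x ∈ cube c δ, |mDW (cube c δ) α F x| ≤ M) ∧
  (∀ α : Fin n → ℕ, deg α = m - 1 → ∀ i : Fin n, ∀ x ∈ cube c δ, ∀ t : ℝ,
    x + t • EuclideanSpace.single i (1 : ℝ) ∈ cube c δ →
    |mDW (cube c δ) α F (x + t • EuclideanSpace.single i (1 : ℝ)) - mDW (cube c δ) α F x|
      ≤ M * |t|)

/-!
By Taylor's formula, the nonnegative function witnessing `P x ∈ GammaStar' m n x M` shows that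
`P x` is nonnegative up to an error `A * ‖z - x‖ ^ m` with `A` proportional to `M`. At a fixed
scale `r`, a nonnegative approximate extension near the set `E` is therefore obtained by blending
the functions `P x + A * (3 * r) ^ m`, where `x` is a point of `E` nearest to the centre of the
partition function: the constants keep the blend nonnegative, and being of size `r ^ m` they are
as harmless as the errors allowed by the compatibility of the `P x`. Running through the scales
`r = 4 ^ (-k)` and replacing the previous function by the finer one near `E` gives, in the limit, a
nonnegative `F` such that, for `x ∈ E`, the derivative of order `i ≤ m` of `F - P x` at a point `z`
off `E` is at most a constant times `A * ‖z - x‖ ^ (m - i)`. Hence `F` is of class `C^{m-1}` with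
the prescribed jets. Since the derivatives of order `m - 1` have slopes bounded by a constant at
every point, on `E` or off it, they are Lipschitz.
-/

section MultiIndex

variable {n : ℕ}

lemma contDiff_foldr_pD (L : List (Fin n)) (k : ℕ) {f : Euc n → ℝ}
    (hf : ContDiff ℝ (L.length + k : ℕ) f) : ContDiff ℝ k (L.foldr pD f) := by
  induction L generalizing k with
  | nil => simpa using hf
  | cons i L ih =>
    have hL : ContDiff ℝ ((k + 1 : ℕ)) (L.foldr pD f) :=
      ih (k + 1) (by rwa [List.length_cons, add_right_comm, add_assoc] at hf)
    exact (hL.fderiv_right (by norm_cast)).clm_apply contDiff_const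

lemma foldr_pD_ofFn {k : ℕ} (r : Fin k → Fin n) {f : Euc n → ℝ} (hf : ContDiff ℝ k f)
    (z : Euc n) :
    (List.ofFn r).foldr pD f z =
      iteratedFDeriv ℝ k f z fun j => EuclideanSpace.single (r j) (1 : ℝ) := by
  induction k generalizing z with
  | zero => simp
  | succ k ih =>
    have hd : DifferentiableAt ℝ (iteratedFDeriv ℝ k f) z :=
      hf.differentiable_iteratedFDeriv (by norm_cast; exact k.lt_succ_self) z
    have hk : ContDiff ℝ k f := hf.of_le (by norm_cast; exact k.le_succ)
    rw [List.ofFn_succ, List.foldr_cons, funext (ih (fun j => r j.succ) hk), pD,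
      (hd.hasFDerivAt.continuousMultilinear_apply_const _).fderiv,
      iteratedFDeriv_succ_apply_left]
    rfl

lemma pD_comm {f : Euc n → ℝ} (hf : ContDiff ℝ 2 f) (i j : Fin n) :
    pD i (pD j f) = pD j (pD i f) := by
  funext z
  have hd : DifferentiableAt ℝ (fderiv ℝ f) z :=
    (hf.fderiv_right (m := 1) le_rfl).differentiable one_ne_zero z
  have second_deriv (a b : Fin n) : pD a (pD b f) z =
      fderiv ℝ (fderiv ℝ f) z (EuclideanSpace.single a 1) (EuclideanSpace.single b 1) := by
    rw [pD, show pD b f = fun x => fderiv ℝ f x (EuclideanSpace.single b 1) from rfl,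
      fderiv_clm_apply hd (by fun_prop)]
    simp
  rw [second_deriv, second_deriv]
  exact hf.contDiffAt.isSymmSndFDerivAt (by simp) _ _

lemma foldr_pD_perm {L L' : List (Fin n)} (h : L.Perm L') {f : Euc n → ℝ}
    (hf : ContDiff ℝ L.length f) : L.foldr pD f = L'.foldr pD f := by
  induction h with
  | nil => rfl
  | cons i _ ih =>
    rw [List.foldr_cons, List.foldr_cons, ih (hf.of_le (by norm_cast; simp))]
  | swap i j L => exact pD_comm (contDiff_foldr_pD L 2 hf) j i
  | trans h _ ih ih' => rw [ih hf, ih' (h.length_eq ▸ hf)]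

/-- The directions along which `mD α` differentiates, with multiplicity and in order. -/
def directions (α : Fin n → ℕ) : List (Fin n) :=
  (List.finRange n).flatMap fun i => List.replicate (α i) i

lemma length_directions (α : Fin n → ℕ) : (directions α).length = deg α := by
  rw [directions, deg, List.length_flatMap]
  simp [← List.ofFn_eq_map, List.sum_ofFn]

lemma count_directions (α : Fin n → ℕ) (i : Fin n) : (directions α).count i = α i := by
  have hcount : (List.count i ∘ fun j => List.replicate (α j) j) =
      fun j => if j = i then α j else 0 := by
    funext j
    simp [List.count_replicate]
  rw [directions, List.count_flatMap, hcount, ← List.ofFn_eq_map, List.sum_ofFn]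
  simp

lemma exists_mD_eq_iteratedFDeriv (α : Fin n → ℕ) : ∃ r : Fin (deg α) → Fin n,
    ∀ f : Euc n → ℝ, ContDiff ℝ (deg α) f → ∀ z, mD α f z =
      iteratedFDeriv ℝ (deg α) f z fun j => EuclideanSpace.single (r j) (1 : ℝ) := by
  obtain ⟨r, hr⟩ : ∃ r : Fin (deg α) → Fin n, List.ofFn r = directions α := by
    rw [← length_directions α]
    exact ⟨_, List.ofFn_get _⟩
  refine ⟨r, fun f hf z => ?_⟩
  rw [← foldr_pD_ofFn r hf, hr]
  rfl

lemma exists_iteratedFDeriv_eq_mD {k : ℕ} (r : Fin k → Fin n) : ∃ α : Fin n → ℕ, deg α = k ∧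
    ∀ f : Euc n → ℝ, ContDiff ℝ k f → ∀ z,
      (iteratedFDeriv ℝ k f z fun j => EuclideanSpace.single (r j) (1 : ℝ)) = mD α f z := by
  let α : Fin n → ℕ := fun i => (List.ofFn r).count i
  have hperm : (List.ofFn r).Perm (directions α) :=
    List.perm_iff_count.mpr fun i => (count_directions α i).symm
  refine ⟨α, by rw [← length_directions, ← hperm.length_eq, List.length_ofFn], fun f hf z => ?_⟩
  rw [← foldr_pD_ofFn r hf, foldr_pD_perm hperm (by rwa [List.length_ofFn])]
  rfl

lemma norm_le_of_norm_apply_single_le {W : Type*} [NormedAddCommGroup W] [NormedSpace ℝ W] {k : ℕ}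
    (T : ContinuousMultilinearMap ℝ (fun _ : Fin k => Euc n) W) {A : ℝ} (hA : 0 ≤ A)
    (hT : ∀ r : Fin k → Fin n, ‖T fun j => EuclideanSpace.single (r j) (1 : ℝ)‖ ≤ A) :
    ‖T‖ ≤ n ^ k * A := by
  refine T.opNorm_le_bound (by positivity) fun v => ?_
  have hv : v = fun j => ∑ i, v j i • EuclideanSpace.single i (1 : ℝ) := by
    funext j
    ext l
    simp [Pi.single_apply]
  have hterm (r : Fin k → Fin n) :
      ‖T fun j => v j (r j) • EuclideanSpace.single (r j) (1 : ℝ)‖ ≤ A * ∏ j, ‖v j‖ := by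
    rw [T.map_smul_univ, norm_smul, mul_comm, norm_prod]
    gcongr with j
    · exact hT r
    · exact PiLp.norm_apply_le _ _
  calc ‖T v‖
      = ‖∑ r : Fin k → Fin n, T fun j => v j (r j) • EuclideanSpace.single (r j) (1 : ℝ)‖ := by
        conv_lhs => rw [hv, T.map_sum]
    _ ≤ ∑ _r : Fin k → Fin n, A * ∏ j, ‖v j‖ := norm_sum_le_of_le _ fun r _ => hterm r
    _ = n ^ k * A * ∏ j, ‖v j‖ := by simp [mul_assoc]

lemma norm_iteratedFDeriv_le_of_abs_mD_le {k : ℕ} {f : Euc n → ℝ} (hf : ContDiff ℝ k f) {z : Euc n}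
    {A : ℝ} (hA : 0 ≤ A) (h : ∀ α : Fin n → ℕ, deg α = k → |mD α f z| ≤ A) :
    ‖iteratedFDeriv ℝ k f z‖ ≤ n ^ k * A := by
  refine norm_le_of_norm_apply_single_le _ hA fun r => ?_
  obtain ⟨α, hα, hr⟩ := exists_iteratedFDeriv_eq_mD r
  rw [hr f hf]
  exact h α hα

lemma norm_apply_single_le {W : Type*} [NormedAddCommGroup W] [NormedSpace ℝ W] {k : ℕ}
    (T : ContinuousMultilinearMap ℝ (fun _ : Fin k => Euc n) W) (r : Fin k → Fin n) :
    ‖T fun j => EuclideanSpace.single (r j) (1 : ℝ)‖ ≤ ‖T‖ := by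
  simpa using T.le_opNorm fun j => EuclideanSpace.single (r j) (1 : ℝ)

lemma abs_mD_le {α : Fin n → ℕ} {f : Euc n → ℝ} (hf : ContDiff ℝ (deg α) f) (z : Euc n) :
    |mD α f z| ≤ ‖iteratedFDeriv ℝ (deg α) f z‖ := by
  obtain ⟨r, hr⟩ := exists_mD_eq_iteratedFDeriv α
  rw [hr f hf]
  exact norm_apply_single_le (iteratedFDeriv ℝ _ f z) r

lemma mD_eq_of_iteratedFDeriv_eq {α : Fin n → ℕ} {f g : Euc n → ℝ} (hf : ContDiff ℝ (deg α) f)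
    (hg : ContDiff ℝ (deg α) g) {z : Euc n}
    (h : iteratedFDeriv ℝ (deg α) f z = iteratedFDeriv ℝ (deg α) g z) : mD α f z = mD α g z := by
  obtain ⟨r, hr⟩ := exists_mD_eq_iteratedFDeriv α
  rw [hr f hf, hr g hg, h]

lemma iteratedFDeriv_eq_of_mD_eq {k : ℕ} {f g : Euc n → ℝ} (hf : ContDiff ℝ k f)
    (hg : ContDiff ℝ k g) {z : Euc n} (h : ∀ α : Fin n → ℕ, deg α = k → mD α f z = mD α g z) :
    iteratedFDeriv ℝ k f z = iteratedFDeriv ℝ k g z := by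
  refine sub_eq_zero.mp (norm_le_zero_iff.mp ?_)
  simpa using norm_le_of_norm_apply_single_le (n := n)
    (iteratedFDeriv ℝ k f z - iteratedFDeriv ℝ k g z) le_rfl fun r => by
      obtain ⟨α, hα, hr⟩ := exists_iteratedFDeriv_eq_mD r
      simp [hr f hf, hr g hg, h α hα]

lemma cmLipNormLe_of_norm_iteratedFDeriv_le {m : ℕ} {F : Euc n → ℝ} {A : ℝ}
    (hF : ContDiff ℝ (m - 1 : ℕ) F)
    (hbound : ∀ i ≤ m - 1, ∀ z, ‖iteratedFDeriv ℝ i F z‖ ≤ A)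
    (hlip : ∀ x y, ‖iteratedFDeriv ℝ (m - 1) F x - iteratedFDeriv ℝ (m - 1) F y‖ ≤ A * ‖x - y‖) :
    CmLipNormLe m n F A := by
  have hF' (α : Fin n → ℕ) (hα : deg α ≤ m - 1) : ContDiff ℝ (deg α) F :=
    hF.of_le (by exact_mod_cast hα)
  refine ⟨hF, fun α hα z => (abs_mD_le (hF' α hα) z).trans (hbound _ hα z), fun α hα i x t => ?_⟩
  obtain ⟨r, hr⟩ := exists_mD_eq_iteratedFDeriv α
  rw [hr F (hF' α hα.le), hr F (hF' α hα.le), ← sub_apply]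
  refine (norm_apply_single_le (iteratedFDeriv ℝ _ F _ - iteratedFDeriv ℝ _ F x) r).trans ?_
  rw [hα]
  refine (hlip _ x).trans_eq ?_
  rw [add_sub_cancel_left, norm_smul, Real.norm_eq_abs, PiLp.norm_single, norm_one, mul_one]

end MultiIndex

section ScaledDerivBound

variable {V W : Type*} [NormedAddCommGroup V] [NormedSpace ℝ V]
  [NormedAddCommGroup W] [NormedSpace ℝ W]

/-- The `C^m` norm of `f` at `z`, measured in units of length `r`, is at most `Λ`. This is how
derivative estimates at a Whitney scale `r` are recorded. -/
def ScaledDerivBound (m : ℕ) (f : V → W) (z : V) (r Λ : ℝ) : Prop :=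
  ∀ i ≤ m, r ^ i * ‖iteratedFDeriv ℝ i f z‖ ≤ Λ

namespace ScaledDerivBound

variable {m : ℕ} {f g : V → W} {z : V} {r Λ Λ' : ℝ}

lemma nonneg (h : ScaledDerivBound m f z r Λ) : 0 ≤ Λ :=
  (by simp : 0 ≤ r ^ 0 * ‖iteratedFDeriv ℝ 0 f z‖).trans (h 0 m.zero_le)

lemma mono (h : ScaledDerivBound m f z r Λ) (hΛ : Λ ≤ Λ') : ScaledDerivBound m f z r Λ' :=
  fun i hi => (h i hi).trans hΛ

lemma mono_scale {r' : ℝ} (h : ScaledDerivBound m f z r Λ) (hr' : 0 ≤ r') (hle : r' ≤ r) :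
    ScaledDerivBound m f z r' Λ :=
  fun i hi => le_trans (by gcongr) (h i hi)

lemma congr (h : ScaledDerivBound m f z r Λ) (hfg : g =ᶠ[nhds z] f) :
    ScaledDerivBound m g z r Λ := fun i hi => by
  rw [(hfg.iteratedFDeriv ℝ i).eq_of_nhds]
  exact h i hi

lemma add (hr : 0 ≤ r) (hf : ContDiff ℝ m f) (hg : ContDiff ℝ m g)
    (h : ScaledDerivBound m f z r Λ) (h' : ScaledDerivBound m g z r Λ') :
    ScaledDerivBound m (fun y => f y + g y) z r (Λ + Λ') := fun i hi => by
  have him : (i : WithTop ℕ∞) ≤ m := by exact_mod_cast hi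
  rw [fun_iteratedFDeriv_add_apply (hf.contDiffAt.of_le him) (hg.contDiffAt.of_le him)]
  calc r ^ i * ‖iteratedFDeriv ℝ i f z + iteratedFDeriv ℝ i g z‖
      ≤ r ^ i * (‖iteratedFDeriv ℝ i f z‖ + ‖iteratedFDeriv ℝ i g z‖) := by
        gcongr
        exact norm_add_le _ _
    _ ≤ Λ + Λ' := by
        rw [mul_add]
        exact add_le_add (h i hi) (h' i hi)

lemma sub (hr : 0 ≤ r) (hf : ContDiff ℝ m f) (hg : ContDiff ℝ m g)
    (h : ScaledDerivBound m f z r Λ) (h' : ScaledDerivBound m g z r Λ') :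
    ScaledDerivBound m (fun y => f y - g y) z r (Λ + Λ') := fun i hi => by
  have him : (i : WithTop ℕ∞) ≤ m := by exact_mod_cast hi
  rw [fun_iteratedFDeriv_sub_apply (hf.contDiffAt.of_le him) (hg.contDiffAt.of_le him)]
  calc r ^ i * ‖iteratedFDeriv ℝ i f z - iteratedFDeriv ℝ i g z‖
      ≤ r ^ i * (‖iteratedFDeriv ℝ i f z‖ + ‖iteratedFDeriv ℝ i g z‖) := by
        gcongr
        exact norm_sub_le _ _
    _ ≤ Λ + Λ' := by
        rw [mul_add]
        exact add_le_add (h i hi) (h' i hi)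

lemma const (m : ℕ) (c : W) (z : V) (r : ℝ) : ScaledDerivBound m (fun _ : V => c) z r ‖c‖ := by
  intro i _
  cases i with
  | zero => simp
  | succ i => simp [iteratedFDeriv_const_of_ne (𝕜 := ℝ) i.succ_ne_zero c]

lemma mul {f g : V → ℝ} (hr : 0 ≤ r) (hf : ContDiff ℝ m f) (hg : ContDiff ℝ m g)
    (h : ScaledDerivBound m f z r Λ) (h' : ScaledDerivBound m g z r Λ') :
    ScaledDerivBound m (fun y => f y * g y) z r (2 ^ m * (Λ * Λ')) := fun i hi => by
  have hΛ := h.nonneg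
  have hΛ' := h'.nonneg
  calc r ^ i * ‖iteratedFDeriv ℝ i (fun y => f y * g y) z‖
      ≤ r ^ i * ∑ j ∈ Finset.range (i + 1),
          (i.choose j : ℝ) * ‖iteratedFDeriv ℝ j f z‖ * ‖iteratedFDeriv ℝ (i - j) g z‖ := by
        gcongr
        exact norm_iteratedFDeriv_mul_le hf hg z (by exact_mod_cast hi)
    _ = ∑ j ∈ Finset.range (i + 1), (i.choose j : ℝ) *
          ((r ^ j * ‖iteratedFDeriv ℝ j f z‖) *
            (r ^ (i - j) * ‖iteratedFDeriv ℝ (i - j) g z‖)) := by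
        rw [Finset.mul_sum]
        refine Finset.sum_congr rfl fun j hj => ?_
        rw [← pow_mul_pow_sub r (Nat.lt_succ_iff.mp (Finset.mem_range.mp hj))]
        ring
    _ ≤ ∑ j ∈ Finset.range (i + 1), (i.choose j : ℝ) * (Λ * Λ') := by
        gcongr with j hj
        · exact h j ((Nat.lt_succ_iff.mp (Finset.mem_range.mp hj)).trans hi)
        · exact h' (i - j) ((i.sub_le j).trans hi)
    _ = 2 ^ i * (Λ * Λ') := by
        rw [← Finset.sum_mul]
        exact_mod_cast congrArg (fun k : ℕ => (k : ℝ) * (Λ * Λ')) (Nat.sum_range_choose i)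
    _ ≤ 2 ^ m * (Λ * Λ') := by
        gcongr
        exact one_le_two

lemma sum {ι : Type*} (S : Finset ι) {f : ι → V → W} (hr : 0 ≤ r)
    (hf : ∀ j ∈ S, ContDiff ℝ m (f j)) (h : ∀ j ∈ S, ScaledDerivBound m (f j) z r Λ) :
    ScaledDerivBound m (fun y => ∑ j ∈ S, f j y) z r (S.card * Λ) := fun i hi => by
  rw [iteratedFDeriv_fun_sum_apply
    fun j hj => (hf j hj).contDiffAt.of_le (by exact_mod_cast hi)]
  calc r ^ i * ‖∑ j ∈ S, iteratedFDeriv ℝ i (f j) z‖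
      ≤ ∑ j ∈ S, r ^ i * ‖iteratedFDeriv ℝ i (f j) z‖ := by
        rw [← Finset.mul_sum]
        gcongr
        exact norm_sum_le _ _
    _ ≤ S.card * Λ := by
        rw [← nsmul_eq_mul]
        exact S.sum_le_card_nsmul _ _ fun j hj => h j hj i hi

end ScaledDerivBound

end ScaledDerivBound

section Taylor

variable {V W : Type*} [NormedAddCommGroup V] [NormedSpace ℝ V]
  [NormedAddCommGroup W] [NormedSpace ℝ W]

lemma norm_le_of_norm_fderiv_le_of_mem_closedBall {f : V → W} (hf : Differentiable ℝ f) {x y : V}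
    {r B : ℝ} (hx : ‖f x‖ ≤ B * r) (hball : ∀ w ∈ Metric.closedBall x r, ‖fderiv ℝ f w‖ ≤ B)
    (hy : y ∈ Metric.closedBall x r) : ‖f y‖ ≤ 2 * B * r := by
  have hxr : x ∈ Metric.closedBall x r := Metric.mem_closedBall_self (dist_nonneg.trans hy)
  have hB : 0 ≤ B := (norm_nonneg _).trans (hball x hxr)
  have hmvt : ‖f y - f x‖ ≤ B * r :=
    ((convex_closedBall x r).norm_image_sub_le_of_norm_fderiv_le (fun w _ => hf w) hball
      hxr hy).trans (mul_le_mul_of_nonneg_left (mem_closedBall_iff_norm.mp hy) hB)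
  linarith [norm_le_norm_add_norm_sub' (f y) (f x)]

lemma norm_iteratedFDeriv_le_of_mem_closedBall {k : ℕ} {g : V → W} (hg : ContDiff ℝ k g) {x : V}
    {r A : ℝ} (hr : 0 ≤ r) (hx : ∀ i < k, ‖iteratedFDeriv ℝ i g x‖ ≤ A * r ^ (k - i))
    (hball : ∀ y ∈ Metric.closedBall x r, ‖iteratedFDeriv ℝ k g y‖ ≤ A) :
    ∀ i ≤ k, ∀ y ∈ Metric.closedBall x r,
      ‖iteratedFDeriv ℝ i g y‖ ≤ 2 ^ (k - i) * A * r ^ (k - i) := by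
  have hxr : x ∈ Metric.closedBall x r := Metric.mem_closedBall_self hr
  have hA : 0 ≤ A := (norm_nonneg _).trans (hball x hxr)
  suffices h : ∀ j i, i + j = k → ∀ y ∈ Metric.closedBall x r,
      ‖iteratedFDeriv ℝ i g y‖ ≤ 2 ^ j * A * r ^ j from
    fun i hi => h (k - i) i (by omega)
  intro j
  induction j with
  | zero =>
    rintro i rfl y hy
    simpa using hball y hy
  | succ j ih =>
    intro i hi y hy
    have hxi : ‖iteratedFDeriv ℝ i g x‖ ≤ 2 ^ j * A * r ^ j * r := by
      refine (hx i (by omega)).trans ?_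
      rw [show k - i = j + 1 by omega, mul_assoc, ← pow_succ]
      gcongr
      exact le_mul_of_one_le_left hA (one_le_pow₀ one_le_two)
    refine (norm_le_of_norm_fderiv_le_of_mem_closedBall
      (hg.differentiable_iteratedFDeriv (by norm_cast; omega)) hxi (fun w hw => ?_) hy).trans_eq
      (by ring)
    rw [norm_fderiv_iteratedFDeriv]
    exact ih (i + 1) (by omega) w hw

end Taylor

section Polynomials

variable {n : ℕ}

open MvPolynomial in
lemma contDiff_peval (P : MPoly n) (N : WithTop ℕ∞) : ContDiff ℝ N (peval P) := by
  unfold peval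
  induction P using MvPolynomial.induction_on with
  | C a => simpa only [eval_C] using contDiff_const
  | add P Q hP hQ => simpa only [map_add] using hP.add hQ
  | mul_X P i hP =>
    simp only [map_mul, eval_X]
    exact hP.mul (EuclideanSpace.proj i : Euc n →L[ℝ] ℝ).contDiff

lemma peval_sub (P Q : MPoly n) : peval (P - Q) = fun z => peval P z - peval Q z :=
  funext fun _ => map_sub _ _ _

open MvPolynomial in
lemma hasFDerivAt_peval (P : MPoly n) (x : Euc n) :
    HasFDerivAt (peval P)
      (∑ i, peval (pderiv i P) x • (EuclideanSpace.proj i : Euc n →L[ℝ] ℝ)) x := by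
  unfold peval
  induction P using MvPolynomial.induction_on with
  | C a => simpa using hasFDerivAt_const a x
  | add P Q hP hQ =>
    simp only [map_add, add_smul, Finset.sum_add_distrib]
    exact hP.add hQ
  | mul_X P j hP =>
    have hmul := hP.mul (EuclideanSpace.proj j : Euc n →L[ℝ] ℝ).hasFDerivAt
    simp only [map_mul, eval_X]
    refine hmul.congr_fderiv ?_
    simp [pderiv_X, Pi.single_apply, add_smul, Finset.sum_add_distrib, Finset.smul_sum, smul_smul,
      apply_ite, ite_smul]

open MvPolynomial in
lemma iteratedFDeriv_peval_monomial_eq_zero {k : ℕ} {s : Fin n →₀ ℕ} (hs : s.degree < k) (a : ℝ) :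
    iteratedFDeriv ℝ k (peval (monomial s a)) = 0 := by
  induction k generalizing s a with
  | zero => exact absurd hs (Nat.not_lt_zero _)
  | succ k ih =>
    have hpartial (i : Fin n) : iteratedFDeriv ℝ k (peval (pderiv i (monomial s a))) = 0 := by
      rw [pderiv_monomial]
      rcases eq_or_ne (s i) 0 with hi | hi
      · have hpeval : peval (0 : MPoly n) = 0 := funext fun _ => map_zero _
        rw [hi, Nat.cast_zero, mul_zero, map_zero, hpeval, iteratedFDeriv_zero]
      · refine ih ?_ _
        have hle : Finsupp.single i 1 ≤ s :=
          Finsupp.single_le_iff.mpr (Nat.one_le_iff_ne_zero.mpr hi)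
        have hdeg : (s - Finsupp.single i 1).degree + 1 = s.degree := by
          conv_rhs => rw [← tsub_add_cancel_of_le hle, map_add, Finsupp.degree_single]
        omega
    funext x
    have hcont (i : Fin n) : ContDiffAt ℝ k (fun y => peval (pderiv i (monomial s a)) y •
        (EuclideanSpace.proj i : Euc n →L[ℝ] ℝ)) x :=
      ((contDiff_peval _ _).smul contDiff_const).contDiffAt
    rw [Pi.zero_apply, ← norm_eq_zero, ← norm_iteratedFDeriv_fderiv,
      funext fun y => (hasFDerivAt_peval (monomial s a) y).fderiv, norm_eq_zero,
      iteratedFDeriv_fun_sum_apply fun i _ => hcont i]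
    refine Finset.sum_eq_zero fun i _ => ?_
    rw [iteratedFDeriv_smul_const_apply (contDiff_peval _ _).contDiffAt, hpartial]
    ext
    simp

lemma iteratedFDeriv_peval_eq_zero {k : ℕ} {P : MPoly n} (hP : P.totalDegree < k) :
    iteratedFDeriv ℝ k (peval P) = 0 := by
  have hsum : peval P =
      fun z => ∑ s ∈ P.support, peval (MvPolynomial.monomial s (P.coeff s)) z := by
    funext z
    conv_lhs => rw [P.as_sum, peval, map_sum]
    rfl
  funext x
  rw [hsum, iteratedFDeriv_fun_sum_apply fun s _ => (contDiff_peval _ _).contDiffAt]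
  refine Finset.sum_eq_zero fun s hs => ?_
  rw [iteratedFDeriv_peval_monomial_eq_zero ((MvPolynomial.le_totalDegree hs).trans_lt hP),
    Pi.zero_apply]

lemma iteratedFDeriv_peval_eq_of_totalDegree_le {k : ℕ} {P : MPoly n} (hP : P.totalDegree ≤ k)
    (x y : Euc n) : iteratedFDeriv ℝ k (peval P) x = iteratedFDeriv ℝ k (peval P) y :=
  is_const_of_fderiv_eq_zero
    ((contDiff_peval P (k + 1 : ℕ)).differentiable_iteratedFDeriv
      (by exact_mod_cast k.lt_succ_self))
    (fun z => norm_eq_zero.mp (by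
      rw [norm_fderiv_iteratedFDeriv, iteratedFDeriv_peval_eq_zero (Nat.lt_succ_of_le hP),
        Pi.zero_apply, norm_zero])) x y

end Polynomials

section Jets

variable {m n : ℕ}

lemma abs_sub_le_of_abs_sub_single_le {f : Euc n → ℝ} {M : ℝ}
    (h : ∀ (i : Fin n) (x : Euc n) (t : ℝ),
      |f (x + t • EuclideanSpace.single i (1 : ℝ)) - f x| ≤ M * |t|) (hM : 0 ≤ M) (x y : Euc n) :
    |f y - f x| ≤ n * M * ‖y - x‖ := by
  have hpartial (s : Finset (Fin n)) :
      |f (x + ∑ i ∈ s, (y - x) i • EuclideanSpace.single i (1 : ℝ)) - f x| ≤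
        ∑ i ∈ s, M * |(y - x) i| := by
    classical
    induction s using Finset.induction_on with
    | empty => simp
    | insert i s hi ih =>
      rw [Finset.sum_insert hi, Finset.sum_insert hi, add_comm ((y - x) i • _), ← add_assoc]
      exact (abs_sub_le _ _ _).trans (add_le_add (h i _ _) ih)
  have hsum : x + ∑ i, (y - x) i • EuclideanSpace.single i (1 : ℝ) = y := by
    ext l
    simp [Pi.single_apply]
  calc |f y - f x| ≤ ∑ i, M * |(y - x) i| := by simpa only [hsum] using hpartial Finset.univ
    _ ≤ ∑ _i : Fin n, M * ‖y - x‖ := by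
        gcongr with i
        exact PiLp.norm_apply_le (y - x) i
    _ = n * M * ‖y - x‖ := by simp [mul_assoc]

namespace CmLipNormLe

variable {F : Euc n → ℝ} {M : ℝ}

lemma nonneg (hF : CmLipNormLe m n F M) : 0 ≤ M :=
  (abs_nonneg _).trans (hF.2.1 0 (by simp [deg]) 0)

lemma norm_iteratedFDeriv_sub_le (hF : CmLipNormLe m n F M) (x y : Euc n) :
    ‖iteratedFDeriv ℝ (m - 1) F y - iteratedFDeriv ℝ (m - 1) F x‖ ≤
      n ^ (m - 1) * (n * M * ‖y - x‖) := by
  have hM := hF.nonneg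
  refine norm_le_of_norm_apply_single_le _ (by positivity) fun r => ?_
  obtain ⟨α, hα, hr⟩ := exists_iteratedFDeriv_eq_mD r
  rw [sub_apply, hr F hF.1, hr F hF.1, Real.norm_eq_abs]
  exact abs_sub_le_of_abs_sub_single_le (hF.2.2 α hα) hM x y

lemma iteratedFDeriv_eq_of_isJetAt (hF : CmLipNormLe m n F M) {P : MPoly n} {x : Euc n}
    (hP : IsJetAt m n F x P) {i : ℕ} (hi : i ≤ m - 1) :
    iteratedFDeriv ℝ i F x = iteratedFDeriv ℝ i (peval P) x :=
  iteratedFDeriv_eq_of_mD_eq (hF.1.of_le (by exact_mod_cast hi)) (contDiff_peval P _)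
    fun α hα => (hP.2 α (hα ▸ hi)).symm

lemma abs_sub_peval_le_of_isJetAt (hm : 0 < m) (hF : CmLipNormLe m n F M) {P : MPoly n}
    {x : Euc n} (hP : IsJetAt m n F x P) (z : Euc n) :
    |F z - peval P z| ≤ (2 * n) ^ m * M * ‖z - x‖ ^ m := by
  have hM := hF.nonneg
  have hpeval : ContDiff ℝ (m - 1 : ℕ) (peval P) := contDiff_peval P _
  have hsub {i : ℕ} (hi : i ≤ m - 1) (y : Euc n) :
      iteratedFDeriv ℝ i (fun y => F y - peval P y) y =
        iteratedFDeriv ℝ i F y - iteratedFDeriv ℝ i (peval P) y :=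
    fun_iteratedFDeriv_sub_apply (hF.1.contDiffAt.of_le (by exact_mod_cast hi))
      (contDiff_peval P _).contDiffAt
  have htop : ∀ y ∈ Metric.closedBall x ‖z - x‖,
      ‖iteratedFDeriv ℝ (m - 1) (fun y => F y - peval P y) y‖ ≤
        n ^ (m - 1) * (n * M * ‖z - x‖) := fun y hy => by
    rw [hsub le_rfl, iteratedFDeriv_peval_eq_of_totalDegree_le hP.1 y x,
      ← hF.iteratedFDeriv_eq_of_isJetAt hP le_rfl]
    refine (hF.norm_iteratedFDeriv_sub_le x y).trans ?_
    gcongr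
    exact mem_closedBall_iff_norm.mp hy
  have hzero : ∀ i < m - 1, ‖iteratedFDeriv ℝ i (fun y => F y - peval P y) x‖ ≤
      n ^ (m - 1) * (n * M * ‖z - x‖) * ‖z - x‖ ^ (m - 1 - i) := fun i hi => by
    rw [hsub hi.le, hF.iteratedFDeriv_eq_of_isJetAt hP hi.le, sub_self, norm_zero]
    positivity
  have htaylor := norm_iteratedFDeriv_le_of_mem_closedBall (hF.1.sub hpeval) (norm_nonneg (z - x))
    hzero htop 0 (Nat.zero_le _) z (mem_closedBall_iff_norm.mpr le_rfl)
  rw [norm_iteratedFDeriv_zero, Real.norm_eq_abs, tsub_zero] at htaylor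
  refine htaylor.trans ?_
  obtain ⟨k, rfl⟩ : ∃ k, m = k + 1 := Nat.exists_eq_add_one.mpr hm
  rw [Nat.add_sub_cancel]
  calc 2 ^ k * (n ^ k * (n * M * ‖z - x‖)) * ‖z - x‖ ^ k
      = 2 ^ k * n ^ (k + 1) * M * ‖z - x‖ ^ (k + 1) := by ring
    _ ≤ (2 * n) ^ (k + 1) * M * ‖z - x‖ ^ (k + 1) := by
        rw [mul_pow]
        gcongr
        · exact one_le_two
        · exact k.le_succ

end CmLipNormLe

lemma norm_iteratedFDeriv_peval_le {P : MPoly n} (hP : P.totalDegree < m) {x z : Euc n}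
    {r M : ℝ} (hM : 0 ≤ M) (hz : ‖z - x‖ ≤ r)
    (hx : ∀ α : Fin n → ℕ, deg α < m → |mD α (peval P) x| ≤ M * r ^ (m - deg α)) :
    ∀ i ≤ m, ‖iteratedFDeriv ℝ i (peval P) z‖ ≤ (2 * (n + 1)) ^ m * M * r ^ (m - i) := by
  have hr : 0 ≤ r := (norm_nonneg _).trans hz
  have hlow : ∀ i < m,
      ‖iteratedFDeriv ℝ i (peval P) x‖ ≤ (n + 1) ^ m * M * r ^ (m - i) := fun i hi => by
    have hpow : (n : ℝ) ^ i ≤ (n + 1) ^ m :=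
      (pow_le_pow_left₀ n.cast_nonneg (by linarith) i).trans
        (pow_le_pow_right₀ (by linarith [n.cast_nonneg (α := ℝ)]) hi.le)
    calc ‖iteratedFDeriv ℝ i (peval P) x‖ ≤ n ^ i * (M * r ^ (m - i)) :=
          norm_iteratedFDeriv_le_of_abs_mD_le (contDiff_peval P _) (by positivity)
            fun α hα => hα ▸ hx α (hα ▸ hi)
      _ ≤ (n + 1) ^ m * (M * r ^ (m - i)) := by gcongr
      _ = (n + 1) ^ m * M * r ^ (m - i) := (mul_assoc _ _ _).symm
  intro i hi
  refine (norm_iteratedFDeriv_le_of_mem_closedBall (contDiff_peval P _) hr hlow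
    (fun y _ => ?_) i hi z (mem_closedBall_iff_norm.mpr hz)).trans ?_
  · rw [iteratedFDeriv_peval_eq_zero hP, Pi.zero_apply, norm_zero]
    positivity
  · rw [mul_pow, mul_assoc (2 ^ m)]
    gcongr
    · exact one_le_two
    · exact m.sub_le i

end Jets

section WhitneyField

/-- A nonnegative Whitney field of order `m` on `E` with constant `A`: a function `p x` for each
`x ∈ E`, playing the role of the prescribed jet at `x`, which is nonnegative up to an error of
order `m` at `x`, compatible with the other `p y`, and of moderate growth. The estimates are stated
at every point `z` rather than at `x` only; for polynomials of degree less than `m` this costs a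
constant. -/
structure IsNonnegWhitneyField {V : Type*} [NormedAddCommGroup V] [NormedSpace ℝ V] (m : ℕ)
    (E : Set V) (p : V → V → ℝ) (A : ℝ) : Prop where
  contDiff : ∀ x ∈ E, ContDiff ℝ m (p x)
  nonneg : ∀ x ∈ E, ∀ z, 0 ≤ p x z + A * ‖z - x‖ ^ m
  norm_sub_le : ∀ x ∈ E, ∀ y ∈ E, ∀ z, ∀ i ≤ m,
    ‖iteratedFDeriv ℝ i (fun w => p x w - p y w) z‖ ≤ A * (‖z - x‖ + ‖z - y‖) ^ (m - i)
  norm_le : ∀ x ∈ E, ∀ z, ∀ i ≤ m, ‖iteratedFDeriv ℝ i (p x) z‖ ≤ A * (1 + ‖z - x‖) ^ m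

lemma isNonnegWhitneyField_peval {m n : ℕ} (hm : 0 < m) {E : Set (Euc n)} {P : Euc n → MPoly n}
    {M : ℝ} (hM : 0 ≤ M) (hP : ∀ x ∈ E, P x ∈ GammaStar' m n x M)
    (hcompat : ∀ x ∈ E, ∀ y ∈ E, ∀ β : Fin n → ℕ, deg β ≤ m - 1 →
      |mD β (peval (P x - P y)) x| ≤ M * ‖x - y‖ ^ (m - deg β)) :
    IsNonnegWhitneyField m E (fun x => peval (P x)) ((2 * (n + 1)) ^ m * M) where
  contDiff x _ := contDiff_peval (P x) _
  nonneg x hx z := by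
    obtain ⟨F, hF, hF0, hjet⟩ := hP x hx
    have hdiff := (abs_le.mp (hF.abs_sub_peval_le_of_isJetAt hm hjet z)).2
    have hconst : (2 * n) ^ m * M * ‖z - x‖ ^ m ≤ (2 * (n + 1)) ^ m * M * ‖z - x‖ ^ m := by
      gcongr
      exact le_add_of_nonneg_right zero_le_one
    linarith [hF0 z]
  norm_sub_le x hx y hy z i hi := by
    obtain ⟨_, -, -, hjetx⟩ := hP x hx
    obtain ⟨_, -, -, hjety⟩ := hP y hy
    rw [← peval_sub]
    refine norm_iteratedFDeriv_peval_le
      ((MvPolynomial.totalDegree_sub _ _).trans_lt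
        (max_lt (Nat.lt_of_le_pred hm hjetx.1) (Nat.lt_of_le_pred hm hjety.1)))
      hM (le_add_of_nonneg_right (norm_nonneg _)) (fun α hα => ?_) i hi
    refine (hcompat x hx y hy α (Nat.le_pred_of_lt hα)).trans ?_
    gcongr
    simpa only [norm_sub_rev z x] using norm_sub_le_norm_sub_add_norm_sub x z y
  norm_le x hx z i hi := by
    obtain ⟨F, hF, -, hjet⟩ := hP x hx
    have hone : 1 ≤ 1 + ‖z - x‖ := le_add_of_nonneg_right (norm_nonneg _)
    refine (norm_iteratedFDeriv_peval_le (x := x) (Nat.lt_of_le_pred hm hjet.1) hM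
      (le_add_of_nonneg_left zero_le_one) (fun α hα => ?_) i hi).trans ?_
    · rw [hjet.2 α (Nat.le_pred_of_lt hα)]
      exact (hF.2.1 α (Nat.le_pred_of_lt hα) x).trans
        (le_mul_of_one_le_right hM (one_le_pow₀ hone))
    · gcongr
      exact m.sub_le i

end WhitneyField

section Partition

/-- A partition of unity at scale `r`, with centres `c`: the functions `φ j` are supported in the
balls of radius `r` around the `c j`, have `C^m` norm at most `B` in units of length `r`, and at
most `N` of them are nonzero near any given point. -/
structure IsPartitionAtScale {V ι : Type*} [NormedAddCommGroup V] [NormedSpace ℝ V] (m N : ℕ)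
    (B r : ℝ) (c : ι → V) (φ : ι → V → ℝ) : Prop where
  contDiff : ∀ j, ContDiff ℝ m (φ j)
  nonneg : ∀ j z, 0 ≤ φ j z
  norm_sub_le : ∀ j z, φ j z ≠ 0 → ‖z - c j‖ ≤ r
  scaledDerivBound : ∀ j z, ScaledDerivBound m (φ j) z r B
  exists_finset : ∀ z, ∃ S : Finset ι, S.card ≤ N ∧ ∀ᶠ y in nhds z, ∀ j ∉ S, φ j y = 0
  finsum_eq_one : ∀ z, ∑ᶠ j, φ j z = 1

lemma ScaledDerivBound.comp_inv_smul {V W : Type*} [NormedAddCommGroup V] [NormedSpace ℝ V]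
    [NormedAddCommGroup W] [NormedSpace ℝ W] {m : ℕ} {f : V → W} {r Λ : ℝ} {z : V} (hr : 0 < r)
    (hf : ContDiff ℝ m f) (h : ScaledDerivBound m f (r⁻¹ • z) 1 Λ) :
    ScaledDerivBound m (fun y => f (r⁻¹ • y)) z r Λ := fun i hi => by
  have hcomp := congrFun (iteratedFDeriv_comp_const_smul (𝕜 := ℝ) (f := f) (i := i) r⁻¹
    (hf.of_le (by exact_mod_cast hi))) z
  rw [hcomp, norm_smul, ← mul_assoc, norm_pow, norm_inv, Real.norm_of_nonneg hr.le, ← mul_pow,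
    mul_inv_cancel₀ hr.ne']
  exact h i hi

lemma IsPartitionAtScale.comp_inv_smul {V ι : Type*} [NormedAddCommGroup V] [NormedSpace ℝ V]
    {m N : ℕ} {B r : ℝ} {c : ι → V} {φ : ι → V → ℝ} (h : IsPartitionAtScale m N B 1 c φ)
    (hr : 0 < r) :
    IsPartitionAtScale m N B r (fun j => r • c j) (fun j z => φ j (r⁻¹ • z)) where
  contDiff j := (h.contDiff j).comp (contDiff_const_smul r⁻¹)
  nonneg j z := h.nonneg j _
  norm_sub_le j z hz := by
    have hsub : z - r • c j = r • (r⁻¹ • z - c j) := by rw [smul_sub, smul_inv_smul₀ hr.ne']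
    rw [hsub, norm_smul, Real.norm_of_nonneg hr.le]
    exact mul_le_of_le_one_right hr.le (h.norm_sub_le j _ hz)
  scaledDerivBound j z := (h.scaledDerivBound j _).comp_inv_smul hr (h.contDiff j)
  exists_finset z := by
    obtain ⟨S, hS, hzero⟩ := h.exists_finset (r⁻¹ • z)
    exact ⟨S, hS, (continuous_const_smul r⁻¹).continuousAt.eventually hzero⟩
  finsum_eq_one z := h.finsum_eq_one _

/-- A smooth bump on `(-1, 1)` whose integer translates sum to `1`, because the sum telescopes. -/
def hat (t : ℝ) : ℝ := Real.smoothTransition (t + 1) - Real.smoothTransition t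

lemma contDiff_hat (N : ℕ∞) : ContDiff ℝ N hat :=
  (Real.smoothTransition.contDiff.comp (contDiff_id.add contDiff_const)).sub
    Real.smoothTransition.contDiff

lemma hat_nonneg (t : ℝ) : 0 ≤ hat t :=
  sub_nonneg.mpr (Real.smoothTransition.monotone (by linarith))

lemma abs_lt_one_of_hat_ne_zero {t : ℝ} (ht : hat t ≠ 0) : |t| < 1 := by
  contrapose! ht
  rcases le_abs.mp ht with h | h
  · rw [hat, Real.smoothTransition.one_of_one_le h,
      Real.smoothTransition.one_of_one_le (by linarith), sub_self]
  · rw [hat, Real.smoothTransition.zero_of_nonpos (by linarith : t + 1 ≤ 0),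
      Real.smoothTransition.zero_of_nonpos (by linarith), sub_self]

/-- The integers `a` such that the bump `hat (· - a)` is not identically zero near `u`. -/
def nearbyInts (u : ℝ) : Finset ℤ := {⌊u⌋ - 1, ⌊u⌋, ⌊u⌋ + 1}

lemma sum_nearbyInts_hat (u : ℝ) : ∑ a ∈ nearbyInts u, hat (u - a) = 1 := by
  have hfloor := Int.floor_le u
  have hfloor' := Int.lt_floor_add_one u
  rw [nearbyInts, Finset.sum_insert (by simp; omega), Finset.sum_insert (by simp),
    Finset.sum_singleton]
  push_cast
  calc hat (u - (⌊u⌋ - 1)) + (hat (u - ⌊u⌋) + hat (u - (⌊u⌋ + 1)))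
      = Real.smoothTransition (u - ⌊u⌋ + 2) - Real.smoothTransition (u - ⌊u⌋ - 1) := by
        unfold hat
        ring_nf
    _ = 1 := by
        rw [Real.smoothTransition.one_of_one_le (by linarith),
          Real.smoothTransition.zero_of_nonpos (by linarith), sub_zero]

lemma eventually_hat_sub_eq_zero (u : ℝ) :
    ∀ᶠ v in nhds u, ∀ a : ℤ, a ∉ nearbyInts u → hat (v - a) = 0 := by
  have hfloor := Int.floor_le u
  have hfloor' := Int.lt_floor_add_one u
  filter_upwards [Ioo_mem_nhds (by linarith : (⌊u⌋ - 1 : ℝ) < u) hfloor'] with v hv a ha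
  by_contra hne
  obtain ⟨h₁, h₂⟩ := abs_lt.mp (abs_lt_one_of_hat_ne_zero hne)
  have hlow : ⌊u⌋ - 2 < a := by exact_mod_cast (by linarith [hv.1] : (⌊u⌋ - 2 : ℝ) < a)
  have hhigh : a < ⌊u⌋ + 2 := by exact_mod_cast (by linarith [hv.2] : (a : ℝ) < ⌊u⌋ + 2)
  refine ha ?_
  simp only [nearbyInts, Finset.mem_insert, Finset.mem_singleton]
  omega

variable {n : ℕ}

lemma norm_le_of_abs_apply_le {y : Euc n} {a : ℝ} (h : ∀ l, |y l| ≤ a) : ‖y‖ ≤ n * a := by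
  have hsum : y = ∑ i, y i • EuclideanSpace.single i (1 : ℝ) := by
    ext l
    simp [Pi.single_apply]
  calc ‖y‖ ≤ ∑ i, ‖y i • EuclideanSpace.single i (1 : ℝ)‖ := by
        conv_lhs => rw [hsum]
        exact norm_sum_le _ _
    _ ≤ ∑ _i : Fin n, a := by
        gcongr with i
        simpa [norm_smul] using h i
    _ = n * a := by simp

/-- A smooth bump in the unit ball whose translates by the lattice `(ℤ / (n + 1))ⁿ` sum to `1`. -/
def latticeBump (z : Euc n) : ℝ := ∏ l, hat ((n + 1) * z l)

/-- The point with integer coordinates `j` in the lattice of mesh `1 / (n + 1)`. -/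
def latticePoint (j : Fin n → ℤ) : Euc n := WithLp.toLp 2 fun l => j l / (n + 1)

lemma latticeBump_sub_latticePoint (z : Euc n) (j : Fin n → ℤ) :
    latticeBump (z - latticePoint j) = ∏ l, hat ((n + 1) * z l - j l) := by
  refine Finset.prod_congr rfl fun l _ => congrArg hat ?_
  simp only [latticePoint, PiLp.sub_apply]
  field_simp

lemma contDiff_latticeBump (N : ℕ∞) : ContDiff ℝ N (latticeBump (n := n)) :=
  contDiff_prod fun l _ => (contDiff_hat N).comp
    (contDiff_const.mul (EuclideanSpace.proj l : Euc n →L[ℝ] ℝ).contDiff)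

lemma norm_le_one_of_latticeBump_ne_zero {z : Euc n} (hz : latticeBump z ≠ 0) : ‖z‖ ≤ 1 := by
  have hn : (0 : ℝ) < n + 1 := by positivity
  have hcoord (l : Fin n) : |z l| ≤ 1 / (n + 1) := by
    have h := (abs_lt_one_of_hat_ne_zero (Finset.prod_ne_zero_iff.mp hz l (Finset.mem_univ l))).le
    rw [abs_mul, abs_of_pos hn] at h
    rwa [le_div_iff₀' hn]
  refine (norm_le_of_abs_apply_le hcoord).trans ?_
  rw [mul_one_div, div_le_one hn]
  linarith

lemma exists_norm_iteratedFDeriv_latticeBump_le (n m : ℕ) :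
    ∃ B : ℝ, ∀ i ≤ m, ∀ z : Euc n, ‖iteratedFDeriv ℝ i latticeBump z‖ ≤ B := by
  have hcompact : HasCompactSupport (latticeBump (n := n)) :=
    HasCompactSupport.intro (isCompact_closedBall 0 1) fun z hz => by
      contrapose! hz
      exact mem_closedBall_zero_iff.mpr (norm_le_one_of_latticeBump_ne_zero hz)
  have hbound (i : ℕ) : ∃ B : ℝ, ∀ z : Euc n, ‖iteratedFDeriv ℝ i latticeBump z‖ ≤ B :=
    (hcompact.iteratedFDeriv i).exists_bound_of_continuous
      ((contDiff_latticeBump i).continuous_iteratedFDeriv (by exact_mod_cast le_rfl))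
  choose B hB using hbound
  refine ⟨∑ i ∈ Finset.range (m + 1), B i, fun i hi z => (hB i z).trans ?_⟩
  exact Finset.single_le_sum (fun j _ => (norm_nonneg _).trans (hB j 0))
    (Finset.mem_range.mpr (Nat.lt_succ_of_le hi))

lemma exists_isPartitionAtScale_one (n m : ℕ) : ∃ B : ℝ,
    IsPartitionAtScale m (3 ^ n) B 1 (latticePoint (n := n))
      (fun j z => latticeBump (z - latticePoint j)) := by
  obtain ⟨B, hB⟩ := exists_norm_iteratedFDeriv_latticeBump_le n m
  have hfinite (z : Euc n) : ∀ᶠ y in nhds z,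
      ∀ j ∉ Fintype.piFinset fun l => nearbyInts ((n + 1) * z l),
        latticeBump (y - latticePoint j) = 0 := by
    have hcoord (l : Fin n) : ∀ᶠ y in nhds z, ∀ a : ℤ, a ∉ nearbyInts ((n + 1) * z l) →
        hat ((n + 1) * y l - a) = 0 :=
      (by fun_prop : Continuous fun y : Euc n => (n + 1) * y l).continuousAt.eventually
        (eventually_hat_sub_eq_zero _)
    filter_upwards [Filter.eventually_all.mpr hcoord] with y hy j hj
    obtain ⟨l, hl⟩ := not_forall.mp (mt Fintype.mem_piFinset.mpr hj)
    rw [latticeBump_sub_latticePoint]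
    exact Finset.prod_eq_zero (Finset.mem_univ l) (hy l _ hl)
  refine ⟨B, fun j => ?_, fun j z => ?_, fun j z hz => ?_, fun j z i hi => ?_, fun z => ?_,
    fun z => ?_⟩
  · exact (contDiff_latticeBump m).comp (contDiff_id.sub contDiff_const)
  · exact Finset.prod_nonneg fun _ _ => hat_nonneg _
  · exact norm_le_one_of_latticeBump_ne_zero hz
  · rw [iteratedFDeriv_comp_sub, one_pow, one_mul]
    exact hB i hi _
  · refine ⟨_, ?_, hfinite z⟩
    rw [Fintype.card_piFinset]
    exact (Finset.prod_le_pow_card _ _ 3 fun _ _ => Finset.card_le_three).trans_eq (by simp)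
  · rw [finsum_eq_sum_of_support_subset _ fun j hj => by_contra fun h =>
      hj ((hfinite z).self_of_nhds j h)]
    simp only [latticeBump_sub_latticePoint]
    rw [← Finset.prod_univ_sum (fun l => nearbyInts ((n + 1) * z l))
      fun l a => hat ((n + 1) * z l - a)]
    exact Finset.prod_eq_one fun l _ => sum_nearbyInts_hat _

lemma exists_isPartitionAtScale (n m : ℕ) : ∃ B : ℝ, ∀ r > 0,
    ∃ (c : (Fin n → ℤ) → Euc n) (φ : (Fin n → ℤ) → Euc n → ℝ),
      IsPartitionAtScale m (3 ^ n) B r c φ :=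
  (exists_isPartitionAtScale_one n m).imp fun _ h _ hr => ⟨_, _, h.comp_inv_smul hr⟩

end Partition

section Blend

variable {V ι : Type*}

/-- The functions `q j` patched together by means of a partition of unity `φ`. -/
def blend (φ q : ι → V → ℝ) (z : V) : ℝ := ∑ᶠ j, φ j z * q j z

lemma blend_congr {φ q q' : ι → V → ℝ} {z : V} (h : ∀ j, φ j z ≠ 0 → q j z = q' j z) :
    blend φ q z = blend φ q' z := finsum_congr fun j => by
  rcases eq_or_ne (φ j z) 0 with hj | hj
  · simp only [hj, zero_mul]
  · rw [h j hj]

lemma blend_nonneg {φ q : ι → V → ℝ} {z : V} (hφ : ∀ j, 0 ≤ φ j z)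
    (hq : ∀ j, φ j z ≠ 0 → 0 ≤ q j z) : 0 ≤ blend φ q z := finsum_nonneg fun j => by
  rcases eq_or_ne (φ j z) 0 with hj | hj
  · rw [hj, zero_mul]
  · exact mul_nonneg (hφ j) (hq j hj)

lemma blend_indicator_eq_zero {φ q : ι → V → ℝ} {z : V} {s : Set ι} (hs : ∀ j, φ j z ≠ 0 → j ∉ s) :
    blend φ (s.indicator q) z = 0 := by
  rw [blend_congr (q' := fun _ _ => 0) fun j hj => by rw [Set.indicator_of_notMem (hs j hj)]; rfl]
  simp only [blend, mul_zero, finsum_zero]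

lemma blend_indicator_nonneg {φ q : ι → V → ℝ} {z : V} {s : Set ι} (hφ : ∀ j, 0 ≤ φ j z)
    (hq : ∀ j ∈ s, φ j z ≠ 0 → 0 ≤ q j z) : 0 ≤ blend φ (s.indicator q) z := by
  refine blend_nonneg hφ fun j hjz => ?_
  by_cases hj : j ∈ s
  · simpa only [Set.indicator_of_mem hj] using hq j hj hjz
  · rw [Set.indicator_of_notMem hj, Pi.zero_apply]

namespace IsPartitionAtScale

variable [NormedAddCommGroup V] [NormedSpace ℝ V] {m N : ℕ} {B r : ℝ} {c : ι → V}
  {φ : ι → V → ℝ} {z : V}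

lemma exists_norm_sub_le (h : IsPartitionAtScale m N B r c φ) (z : V) : ∃ j, ‖z - c j‖ ≤ r := by
  obtain ⟨j, hj⟩ : ∃ j, φ j z ≠ 0 := by
    by_contra! hzero
    exact zero_ne_one ((finsum_eq_zero_of_forall_eq_zero hzero).symm.trans (h.finsum_eq_one z))
  exact ⟨j, h.norm_sub_le j z hj⟩

lemma scale_nonneg (h : IsPartitionAtScale m N B r c φ) : 0 ≤ r :=
  let ⟨_, hj⟩ := h.exists_norm_sub_le 0
  (norm_nonneg _).trans hj

lemma exists_eventually_blend_eq_sum (h : IsPartitionAtScale m N B r c φ) (q : ι → V → ℝ) (z : V) :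
    ∃ S : Finset ι, S.card ≤ N ∧ (∀ j ∈ S, ‖z - c j‖ ≤ r) ∧
      blend φ q =ᶠ[nhds z] fun y => ∑ j ∈ S, φ j y * q j y := by
  obtain ⟨S, hcard, hS⟩ := h.exists_finset z
  have hfar : ∀ᶠ y in nhds z, ∀ j ∈ S, ¬ ‖z - c j‖ ≤ r → φ j y = 0 := by
    refine S.eventually_all.mpr fun j _ => Filter.eventually_imp_distrib_left.mpr fun hj => ?_
    have hcont : Continuous fun y : V => ‖y - c j‖ := by fun_prop
    filter_upwards [hcont.continuousAt.eventually_const_lt (not_le.mp hj)] with y hy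
    exact by_contra fun hne => hy.not_ge (h.norm_sub_le j y hne)
  classical
  refine ⟨S.filter fun j => ‖z - c j‖ ≤ r, (S.card_filter_le _).trans hcard,
    fun j hj => (Finset.mem_filter.mp hj).2, ?_⟩
  filter_upwards [hS, hfar] with y hy hy'
  refine finsum_eq_sum_of_support_subset _ fun j hj => ?_
  have hne : φ j y ≠ 0 := left_ne_zero_of_mul hj
  have hjS : j ∈ S := by_contra fun hj => hne (hy j hj)
  exact Finset.mem_filter.mpr ⟨hjS, by_contra fun hj => hne (hy' j hjS hj)⟩

lemma hasFiniteSupport (h : IsPartitionAtScale m N B r c φ) (q : ι → V → ℝ) (z : V) :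
    (fun j => φ j z * q j z).HasFiniteSupport := by
  obtain ⟨S, -, hS⟩ := h.exists_finset z
  exact S.finite_toSet.subset fun j hj =>
    by_contra fun hjS => left_ne_zero_of_mul hj (hS.self_of_nhds j hjS)

lemma blend_const (h : IsPartitionAtScale m N B r c φ) (a : ℝ) (z : V) :
    blend φ (fun _ _ => a) z = a := by
  rw [blend, ← finsum_mul', h.finsum_eq_one, one_mul]
  simpa only [mul_one] using h.hasFiniteSupport (fun _ _ => 1) z

lemma blend_sub (h : IsPartitionAtScale m N B r c φ) (q q' : ι → V → ℝ) (z : V) :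
    blend φ (fun j y => q j y - q' j y) z = blend φ q z - blend φ q' z := by
  simp only [blend, mul_sub]
  exact finsum_sub_distrib (h.hasFiniteSupport q z) (h.hasFiniteSupport q' z)

lemma blend_mul_right (h : IsPartitionAtScale m N B r c φ) (q : ι → V → ℝ) (g : V → ℝ) (z : V) :
    blend φ (fun j y => q j y * g y) z = blend φ q z * g z := by
  simp only [blend, ← mul_assoc]
  exact (finsum_mul' _ _ (h.hasFiniteSupport q z)).symm

lemma contDiff_blend (h : IsPartitionAtScale m N B r c φ) (hq : ∀ j, ContDiff ℝ m (q j)) :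
    ContDiff ℝ m (blend φ q) := contDiff_iff_contDiffAt.mpr fun z => by
  obtain ⟨S, -, -, hS⟩ := h.exists_eventually_blend_eq_sum q z
  exact (ContDiff.sum fun j _ => (h.contDiff j).mul (hq j)).contDiffAt.congr_of_eventuallyEq hS

lemma scaledDerivBound_blend (h : IsPartitionAtScale m N B r c φ) (hq : ∀ j, ContDiff ℝ m (q j))
    {Λ : ℝ} (hbound : ∀ j, ‖z - c j‖ ≤ r → ScaledDerivBound m (q j) z r Λ) :
    ScaledDerivBound m (blend φ q) z r (N * (2 ^ m * (B * Λ))) := by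
  obtain ⟨S, hcard, hnear, hS⟩ := h.exists_eventually_blend_eq_sum q z
  have hmul (j : ι) (hj : ‖z - c j‖ ≤ r) :
      ScaledDerivBound m (fun y => φ j y * q j y) z r (2 ^ m * (B * Λ)) :=
    .mul h.scale_nonneg (h.contDiff j) (hq j) (h.scaledDerivBound j z) (hbound j hj)
  obtain ⟨j, hj⟩ := h.exists_norm_sub_le z
  refine ((ScaledDerivBound.sum S h.scale_nonneg (fun j _ => (h.contDiff j).mul (hq j))
    fun j hj => hmul j (hnear j hj)).congr hS).mono ?_
  exact mul_le_mul_of_nonneg_right (by exact_mod_cast hcard) (hmul j hj).nonneg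

lemma contDiff_blend_indicator (h : IsPartitionAtScale m N B r c φ) {s : Set ι}
    (hq : ∀ j ∈ s, ContDiff ℝ m (q j)) : ContDiff ℝ m (blend φ (s.indicator q)) := by
  refine h.contDiff_blend fun j => ?_
  by_cases hj : j ∈ s
  · simpa only [Set.indicator_of_mem hj] using hq j hj
  · rw [Set.indicator_of_notMem hj]
    exact contDiff_const

lemma scaledDerivBound_blend_indicator (h : IsPartitionAtScale m N B r c φ) {s : Set ι} {Λ : ℝ}
    (hΛ : 0 ≤ Λ) (hq : ∀ j ∈ s, ContDiff ℝ m (q j))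
    (hbound : ∀ j ∈ s, ‖z - c j‖ ≤ r → ScaledDerivBound m (q j) z r Λ) :
    ScaledDerivBound m (blend φ (s.indicator q)) z r (N * (2 ^ m * (B * Λ))) := by
  refine h.scaledDerivBound_blend (fun j => ?_) fun j hjz => ?_
  all_goals by_cases hj : j ∈ s
  · simpa only [Set.indicator_of_mem hj] using hq j hj
  · rw [Set.indicator_of_notMem hj]
    exact contDiff_const
  · simpa only [Set.indicator_of_mem hj] using hbound j hj hjz
  · rw [Set.indicator_of_notMem hj]
    exact (ScaledDerivBound.const m 0 z r).mono (norm_zero.trans_le hΛ)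

lemma blend_indicator_one (h : IsPartitionAtScale m N B r c φ) {s : Set ι}
    (hs : ∀ j, φ j z ≠ 0 → j ∈ s) : blend φ (s.indicator fun _ _ => 1) z = 1 := by
  rw [blend_congr (q' := fun _ _ => 1) fun j hj => by rw [Set.indicator_of_mem (hs j hj)],
    h.blend_const]

lemma blend_indicator_one_le (h : IsPartitionAtScale m N B r c φ) (s : Set ι) (z : V) :
    blend φ (s.indicator fun _ _ => 1) z ≤ 1 := by
  rw [← sub_nonneg]
  nth_rewrite 1 [← h.blend_const 1 z]
  rw [← h.blend_sub]
  refine blend_nonneg (fun j => h.nonneg j z) fun j _ => ?_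
  by_cases hj : j ∈ s <;> simp [hj]

lemma blend_indicator_sub_mul (h : IsPartitionAtScale m N B r c φ) (s : Set ι) (q : ι → V → ℝ)
    (g : V → ℝ) (z : V) :
    blend φ (s.indicator q) z - blend φ (s.indicator fun _ _ => 1) z * g z =
      blend φ (s.indicator fun j w => q j w - g w) z := by
  rw [← h.blend_mul_right, ← h.blend_sub]
  refine blend_congr fun j _ => ?_
  by_cases hj : j ∈ s <;> simp [hj]

end IsPartitionAtScale

end Blend

section LocalExtension

variable {V ι : Type*} [NormedAddCommGroup V] [NormedSpace ℝ V] {m N : ℕ} {E : Set V}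
  {p : V → V → ℝ} {A B r : ℝ}

/-- `T` is a nonnegative function extending the field `p` within distance `r` of `E`, up to an
error of order `m`, and `η` is a matching cutoff: `η = 1` within distance `r` of `E`, both `η` and
`T` vanish beyond distance `3 * r`, and `T - η * p x` is of order `r ^ m` near `x`. -/
structure IsLocalExtension (m : ℕ) (E : Set V) (p : V → V → ℝ) (r B Λ : ℝ) (η T : V → ℝ) :
    Prop where
  contDiff_cutoff : ContDiff ℝ m η
  contDiff : ContDiff ℝ m T
  cutoff_le_one : ∀ z, η z ≤ 1
  nonneg : ∀ z, 0 ≤ T z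
  cutoff_eq_one : ∀ z, Metric.infDist z E ≤ r → η z = 1
  cutoff_eq_zero : ∀ z, 3 * r < Metric.infDist z E → η z = 0
  eq_zero : ∀ z, 3 * r < Metric.infDist z E → T z = 0
  scaledDerivBound_cutoff : ∀ z, ScaledDerivBound m η z r B
  scaledDerivBound_sub : ∀ x ∈ E, ∀ z, ‖z - x‖ ≤ 4 * r →
    ScaledDerivBound m (fun w => T w - η w * p x w) z r (Λ * r ^ m)

lemma IsPartitionAtScale.abs_infDist_sub_le {c : ι → V} {φ : ι → V → ℝ}
    (h : IsPartitionAtScale m N B r c φ) (E : Set V) {j : ι} {z : V} (hj : φ j z ≠ 0) :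
    |Metric.infDist z E - Metric.infDist (c j) E| ≤ r := by
  have hlip := (Metric.lipschitz_infDist_pt E).dist_le_mul z (c j)
  rw [NNReal.coe_one, one_mul, Real.dist_eq, dist_eq_norm] at hlip
  exact hlip.trans (h.norm_sub_le j z hj)

lemma IsNonnegWhitneyField.const_nonneg (hp : IsNonnegWhitneyField m E p A) (hE : E.Nonempty) :
    0 ≤ A := by
  obtain ⟨x, hx⟩ := hE
  simpa using (norm_nonneg _).trans (hp.norm_le x hx x 0 m.zero_le)

lemma IsNonnegWhitneyField.scaledDerivBound_add_sub (hp : IsNonnegWhitneyField m E p A)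
    {x y z : V} (hx : x ∈ E) (hy : y ∈ E) (hzx : ‖z - x‖ ≤ 4 * r) (hzy : ‖z - y‖ ≤ 3 * r) :
    ScaledDerivBound m (fun w => p y w + A * (3 * r) ^ m - p x w) z r
      ((7 ^ m + 3 ^ m) * A * r ^ m) := by
  have hA : 0 ≤ A := hp.const_nonneg ⟨x, hx⟩
  have hr : 0 ≤ r := by linarith [(norm_nonneg _).trans hzy]
  have hdiff : ScaledDerivBound m (fun w => p y w - p x w) z r (7 ^ m * A * r ^ m) := fun i hi =>
    calc r ^ i * ‖iteratedFDeriv ℝ i (fun w => p y w - p x w) z‖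
        ≤ r ^ i * (A * (7 * r) ^ (m - i)) := by
          gcongr
          refine (hp.norm_sub_le y hy x hx z i hi).trans ?_
          gcongr
          linarith
      _ = 7 ^ (m - i) * A * (r ^ i * r ^ (m - i)) := by ring
      _ ≤ 7 ^ m * A * r ^ m := by
          rw [pow_mul_pow_sub r hi]
          gcongr
          · norm_num
          · exact m.sub_le i
  have hconst : ScaledDerivBound m (fun _ : V => A * (3 * r) ^ m) z r (3 ^ m * A * r ^ m) := by
    refine (ScaledDerivBound.const m _ z r).mono (le_of_eq ?_)
    rw [Real.norm_of_nonneg (by positivity), mul_pow]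
    ring
  have hsum := hdiff.add hr ((hp.contDiff y hy).sub (hp.contDiff x hx)) contDiff_const hconst
  refine (hsum.mono (by linarith)).congr (Filter.Eventually.of_forall fun w => ?_)
  ring

lemma IsNonnegWhitneyField.add_nonneg_of_norm_sub_le (hp : IsNonnegWhitneyField m E p A) {x z : V}
    (hx : x ∈ E) (hz : ‖z - x‖ ≤ r) : 0 ≤ p x z + A * r ^ m := by
  have hA : 0 ≤ A := hp.const_nonneg ⟨x, hx⟩
  have hpow : A * ‖z - x‖ ^ m ≤ A * r ^ m := by gcongr
  linarith [hp.nonneg x hx z]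

lemma exists_isLocalExtension [ProperSpace V] (hE : IsClosed E) (hne : E.Nonempty)
    (hp : IsNonnegWhitneyField m E p A) {c : ι → V} {φ : ι → V → ℝ}
    (hφ : IsPartitionAtScale m N B r c φ) :
    ∃ η T, IsLocalExtension m E p r (N * (2 ^ m * B))
      (N * (2 ^ m * (B * ((7 ^ m + 3 ^ m) * A)))) η T := by
  choose π hπE hπ using fun j => hE.exists_infDist_eq_dist hne (c j)
  set s : Set ι := {j | Metric.infDist (c j) E ≤ 2 * r}
  have hr : 0 ≤ r := hφ.scale_nonneg
  have hA : 0 ≤ A := hp.const_nonneg hne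
  have hnear {j : ι} {z : V} (hj : j ∈ s) (hz : ‖z - c j‖ ≤ r) : ‖z - π j‖ ≤ 3 * r := by
    have hcπ : ‖c j - π j‖ ≤ 2 * r := dist_eq_norm (c j) (π j) ▸ hπ j ▸ hj
    linarith [norm_sub_le_norm_sub_add_norm_sub z (c j) (π j)]
  have hmem (z : V) (hz : Metric.infDist z E ≤ r) (j : ι) (hj : φ j z ≠ 0) : j ∈ s :=
    show Metric.infDist (c j) E ≤ 2 * r by linarith [(abs_le.mp (hφ.abs_infDist_sub_le E hj)).1]
  have hnotMem (z : V) (hz : 3 * r < Metric.infDist z E) (j : ι) (hj : φ j z ≠ 0) : j ∉ s :=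
    fun (hjs : Metric.infDist (c j) E ≤ 2 * r) => by
      linarith [(abs_le.mp (hφ.abs_infDist_sub_le E hj)).2]
  have hsmooth (j : ι) : ContDiff ℝ m fun w => p (π j) w + A * (3 * r) ^ m :=
    (hp.contDiff _ (hπE j)).add contDiff_const
  refine ⟨blend φ (s.indicator fun _ _ => 1),
    blend φ (s.indicator fun j w => p (π j) w + A * (3 * r) ^ m),
    hφ.contDiff_blend_indicator fun _ _ => contDiff_const,
    hφ.contDiff_blend_indicator fun j _ => hsmooth j,
    hφ.blend_indicator_one_le s,
    fun z => blend_indicator_nonneg (fun j => hφ.nonneg j z) fun j hj hjz =>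
      hp.add_nonneg_of_norm_sub_le (hπE j) (hnear hj (hφ.norm_sub_le j z hjz)),
    fun z hz => hφ.blend_indicator_one (hmem z hz),
    fun z hz => blend_indicator_eq_zero (hnotMem z hz),
    fun z hz => blend_indicator_eq_zero (hnotMem z hz), fun z => ?_, fun x hx z hz => ?_⟩
  · simpa only [mul_one, norm_one] using hφ.scaledDerivBound_blend_indicator zero_le_one
      (fun _ _ => contDiff_const) fun _ _ _ => (ScaledDerivBound.const m 1 z r).mono norm_one.le
  · simp only [hφ.blend_indicator_sub_mul]
    refine (hφ.scaledDerivBound_blend_indicator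
      (by positivity : (0 : ℝ) ≤ (7 ^ m + 3 ^ m) * A * r ^ m)
      (fun j _ => (hsmooth j).sub (hp.contDiff x hx))
      fun j hj hjz => hp.scaledDerivBound_add_sub hx (hπE j) hz (hnear hj hjz)).mono ?_
    exact le_of_eq (by ring)

end LocalExtension

section Glue

/-- The successive corrections of the Whitney construction: at step `k + 1`, the values on the
support of the cutoff `η (k + 1)` are replaced by the finer local extension `T (k + 1)`. -/
def glue {V : Type*} (η T : ℕ → V → ℝ) : ℕ → V → ℝ
  | 0, z => T 0 z
  | k + 1, z => (1 - η (k + 1) z) * glue η T k z + T (k + 1) z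

section

variable {V : Type*} {η T : ℕ → V → ℝ} {z : V}

lemma glue_nonneg (hη : ∀ k, η k z ≤ 1) (hT : ∀ k, 0 ≤ T k z) (k : ℕ) : 0 ≤ glue η T k z := by
  induction k with
  | zero => exact hT 0
  | succ k ih => exact add_nonneg (mul_nonneg (sub_nonneg.mpr (hη _)) ih) (hT _)

lemma glue_eq_of_cutoff_eq_one {k : ℕ} (h : η k z = 1) : glue η T k z = T k z := by
  cases k with
  | zero => rfl
  | succ k => rw [glue, h, sub_self, zero_mul, zero_add]

lemma glue_eq_of_forall_lt {k l : ℕ} (hkl : k ≤ l) (h : ∀ j, k < j → η j z = 0 ∧ T j z = 0) :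
    glue η T l z = glue η T k z := by
  induction l, hkl using Nat.le_induction with
  | base => rfl
  | succ l hl ih =>
    obtain ⟨hη, hT⟩ := h (l + 1) (Nat.lt_succ_of_le hl)
    rw [glue, hη, hT, sub_zero, one_mul, add_zero, ih]

end

lemma exists_pow_scale {d : ℝ} (hd : 0 < d) (hd' : d ≤ 4 / 5) :
    ∃ k : ℕ, 3 * (1 / 4) ^ (k + 2) < d ∧ d < (1 / 4) ^ k := by
  obtain ⟨k, hk, hk'⟩ := exists_nat_pow_near_of_lt_one (x := 5 / 4 * d) (y := 1 / 4)
    (by positivity) (by linarith) (by norm_num) (by norm_num)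
  have hpos : (0 : ℝ) < (1 / 4) ^ k := by positivity
  refine ⟨k, ?_, by linarith⟩
  rw [pow_succ] at hk
  rw [pow_add]
  linarith

variable {V : Type*} [NormedAddCommGroup V] [NormedSpace ℝ V] {m : ℕ} {E : Set V}
  {p : V → V → ℝ} {A B Λ : ℝ} {η T : ℕ → V → ℝ} {F : V → ℝ} {x z : V}

lemma IsLocalExtension.cutoff_const_nonneg {r : ℝ} {η T : V → ℝ}
    (h : IsLocalExtension m E p r B Λ η T) : 0 ≤ B := (h.scaledDerivBound_cutoff 0).nonneg

lemma glue_eq_of_infDist_le (h : ∀ k, IsLocalExtension m E p ((1 / 4) ^ k) B Λ (η k) (T k))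
    {k l : ℕ} (hz : 3 * (1 / 4) ^ (k + 2) < Metric.infDist z E)
    (hz' : Metric.infDist z E ≤ (1 / 4) ^ k) (hl : k + 1 ≤ l) :
    glue η T l z = (1 - η (k + 1) z) * T k z + T (k + 1) z := by
  rw [glue_eq_of_forall_lt hl fun j hj => ?_, glue,
    glue_eq_of_cutoff_eq_one ((h k).cutoff_eq_one z hz')]
  have hj' : 3 * (1 / 4 : ℝ) ^ j < Metric.infDist z E :=
    (mul_le_mul_of_nonneg_left (pow_le_pow_of_le_one (by norm_num) (by norm_num) hj)
      zero_le_three).trans_lt hz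
  exact ⟨(h j).cutoff_eq_zero z hj', (h j).eq_zero z hj'⟩

lemma glue_eq_of_lt_infDist (h : ∀ k, IsLocalExtension m E p ((1 / 4) ^ k) B Λ (η k) (T k))
    (hz : 3 / 4 < Metric.infDist z E) (l : ℕ) : glue η T l z = T 0 z := by
  refine glue_eq_of_forall_lt l.zero_le fun j hj => ?_
  have hpow : (1 / 4 : ℝ) ^ j ≤ 1 / 4 :=
    pow_le_of_le_one (by norm_num) (by norm_num) hj.ne'
  have hj' : 3 * (1 / 4 : ℝ) ^ j < Metric.infDist z E := by linarith
  exact ⟨(h j).cutoff_eq_zero z hj', (h j).eq_zero z hj'⟩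

lemma tendsto_glue_of_mem (hm : 0 < m)
    (h : ∀ k, IsLocalExtension m E p ((1 / 4) ^ k) B Λ (η k) (T k)) (hx : x ∈ E) :
    Filter.Tendsto (fun k => glue η T k x) Filter.atTop (nhds (p x x)) := by
  have hone (k : ℕ) : η k x = 1 :=
    (h k).cutoff_eq_one x (by rw [Metric.infDist_zero_of_mem hx]; positivity)
  have hdiff (k : ℕ) : ‖glue η T k x - p x x‖ ≤ Λ * ((1 / 4) ^ m) ^ k := by
    have hbound := (h k).scaledDerivBound_sub x hx x (by simp) 0 m.zero_le
    rw [glue_eq_of_cutoff_eq_one (hone k)]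
    rwa [pow_zero, one_mul, norm_iteratedFDeriv_zero, hone, one_mul, pow_right_comm] at hbound
  refine tendsto_iff_norm_sub_tendsto_zero.mpr (squeeze_zero (fun _ => norm_nonneg _) hdiff ?_)
  simpa only [mul_zero] using (tendsto_pow_atTop_nhds_zero_of_lt_one (by positivity)
    (pow_lt_one₀ (by norm_num) (by norm_num) hm.ne')).const_mul Λ

lemma exists_tendsto_glue (hm : 0 < m) (hE : IsClosed E) (hne : E.Nonempty)
    (h : ∀ k, IsLocalExtension m E p ((1 / 4) ^ k) B Λ (η k) (T k)) (z : V) :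
    ∃ a, Filter.Tendsto (fun k => glue η T k z) Filter.atTop (nhds a) := by
  by_cases hz : z ∈ E
  · exact ⟨_, tendsto_glue_of_mem hm h hz⟩
  rcases le_or_gt (Metric.infDist z E) (4 / 5) with hd | hd
  · obtain ⟨k, hk, hk'⟩ := exists_pow_scale ((hE.notMem_iff_infDist_pos hne).mp hz) hd
    exact ⟨_, tendsto_atTop_of_eventually_const (i₀ := k + 1)
      fun l hl => glue_eq_of_infDist_le h hk hk'.le hl⟩
  · exact ⟨_, tendsto_atTop_of_eventually_const (i₀ := 0)
      fun l _ => glue_eq_of_lt_infDist h (by linarith) l⟩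

lemma eventually_eq_of_tendsto_glue
    (h : ∀ k, IsLocalExtension m E p ((1 / 4) ^ k) B Λ (η k) (T k))
    (hF : ∀ w, Filter.Tendsto (fun k => glue η T k w) Filter.atTop (nhds (F w)))
    {k : ℕ} (hz : 3 * (1 / 4) ^ (k + 2) < Metric.infDist z E)
    (hz' : Metric.infDist z E < (1 / 4) ^ k) :
    ∀ᶠ w in nhds z, F w = (1 - η (k + 1) w) * T k w + T (k + 1) w ∧ η k w = 1 := by
  filter_upwards [(Metric.continuous_infDist_pt E).continuousAt.eventually (Ioo_mem_nhds hz hz')]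
    with w hw
  exact ⟨tendsto_nhds_unique (hF w) (tendsto_atTop_of_eventually_const (i₀ := k + 1)
    fun l hl => glue_eq_of_infDist_le h hw.1 hw.2.le hl), (h k).cutoff_eq_one w hw.2.le⟩

lemma eventuallyEq_of_tendsto_glue_of_lt_infDist
    (h : ∀ k, IsLocalExtension m E p ((1 / 4) ^ k) B Λ (η k) (T k))
    (hF : ∀ w, Filter.Tendsto (fun k => glue η T k w) Filter.atTop (nhds (F w)))
    (hz : 3 / 4 < Metric.infDist z E) : F =ᶠ[nhds z] T 0 := by
  filter_upwards [(Metric.continuous_infDist_pt E).continuousAt.eventually (lt_mem_nhds hz)]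
    with w hw
  exact tendsto_nhds_unique (hF w) (tendsto_atTop_of_eventually_const (i₀ := 0)
    fun l _ => glue_eq_of_lt_infDist h hw l)

lemma contDiffAt_of_tendsto_glue (hE : IsClosed E) (hne : E.Nonempty)
    (h : ∀ k, IsLocalExtension m E p ((1 / 4) ^ k) B Λ (η k) (T k))
    (hF : ∀ w, Filter.Tendsto (fun k => glue η T k w) Filter.atTop (nhds (F w))) (hz : z ∉ E) :
    ContDiffAt ℝ m F z := by
  rcases le_or_gt (Metric.infDist z E) (4 / 5) with hd | hd
  · obtain ⟨k, hk, hk'⟩ := exists_pow_scale ((hE.notMem_iff_infDist_pos hne).mp hz) hd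
    exact (((contDiff_const.sub (h (k + 1)).contDiff_cutoff).mul (h k).contDiff).add
      (h (k + 1)).contDiff).contDiffAt.congr_of_eventuallyEq
        ((eventually_eq_of_tendsto_glue h hF hk hk').mono fun _ hw => hw.1)
  · exact (h 0).contDiff.contDiffAt.congr_of_eventuallyEq
      (eventuallyEq_of_tendsto_glue_of_lt_infDist h hF (by linarith))

lemma scaledDerivBound_sub_of_tendsto_glue (hp : IsNonnegWhitneyField m E p A)
    (h : ∀ k, IsLocalExtension m E p ((1 / 4) ^ k) B Λ (η k) (T k))
    (hF : ∀ w, Filter.Tendsto (fun k => glue η T k w) Filter.atTop (nhds (F w)))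
    {k : ℕ} (hz : 3 * (1 / 4) ^ (k + 2) < Metric.infDist z E)
    (hz' : Metric.infDist z E < (1 / 4) ^ k) (hx : x ∈ E) (hzx : ‖z - x‖ ≤ (1 / 4) ^ k) :
    ScaledDerivBound m (fun w => F w - p x w) z ((1 / 4) ^ (k + 1))
      ((8 ^ m * (1 + B) + 1) * Λ * ((1 / 4) ^ (k + 1)) ^ m) := by
  have hr : (0 : ℝ) ≤ (1 / 4) ^ (k + 1) := by positivity
  have hscale : (1 / 4 : ℝ) ^ k = 4 * (1 / 4) ^ (k + 1) := by rw [pow_succ]; ring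
  have hcoarse : ScaledDerivBound m (fun w => T k w - η k w * p x w) z ((1 / 4) ^ (k + 1))
      (Λ * (4 * (1 / 4) ^ (k + 1)) ^ m) := by
    rw [← hscale]
    exact ((h k).scaledDerivBound_sub x hx z (by linarith)).mono_scale hr (by linarith)
  have hcutoff : ScaledDerivBound m (fun w => 1 - η (k + 1) w) z ((1 / 4) ^ (k + 1)) (1 + B) :=
    .sub hr contDiff_const (h (k + 1)).contDiff_cutoff
      ((ScaledDerivBound.const m 1 z _).mono norm_one.le) ((h (k + 1)).scaledDerivBound_cutoff z)
  have hdiff (j : ℕ) : ContDiff ℝ m fun w => T j w - η j w * p x w :=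
    (h j).contDiff.sub ((h j).contDiff_cutoff.mul (hp.contDiff x hx))
  have hcont := contDiff_const (c := (1 : ℝ)).sub (h (k + 1)).contDiff_cutoff
  have hsum := ScaledDerivBound.add hr (hcont.mul (hdiff k)) (hdiff (k + 1))
    (.mul hr hcont (hdiff k) hcutoff hcoarse)
    ((h (k + 1)).scaledDerivBound_sub x hx z (by linarith))
  refine (hsum.congr ?_).mono (le_of_eq ?_)
  · filter_upwards [eventually_eq_of_tendsto_glue h hF hz hz'] with w ⟨hw, hone⟩
    rw [hw, hone]
    ring
  · rw [mul_pow 4, (by norm_num : (8 : ℝ) = 2 * 4), mul_pow 2]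
    ring

end Glue

section OffE

variable {V : Type*} [NormedAddCommGroup V] [NormedSpace ℝ V] {m : ℕ} {E : Set V}
  {p : V → V → ℝ} {A B Λ : ℝ} {η T : ℕ → V → ℝ} {F : V → ℝ} {x y z : V}

/-- `F` takes the values prescribed by the field `p` on `E` and is `C^m` off `E`, with derivatives
of order at most `m` bounded by `K` there and approaching those of `p x` near `x ∈ E` at the rate
of Taylor's formula. No regularity of `F` at the points of `E` is required. -/
structure IsWhitneyExtensionOff (m : ℕ) (E : Set V) (p : V → V → ℝ) (K : ℝ) (F : V → ℝ) :
    Prop where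
  eq_of_mem : ∀ x ∈ E, F x = p x x
  contDiffAt : ∀ z ∉ E, ContDiffAt ℝ m F z
  norm_sub_le : ∀ x ∈ E, ∀ z ∉ E, ‖z - x‖ ≤ 1 / 2 → ∀ i ≤ m,
    ‖iteratedFDeriv ℝ i (fun w => F w - p x w) z‖ ≤ K * ‖z - x‖ ^ (m - i)
  norm_le : ∀ z ∉ E, ∀ i ≤ m, ‖iteratedFDeriv ℝ i F z‖ ≤ K

lemma ScaledDerivBound.norm_le_of_le_two_mul {W : Type*} [NormedAddCommGroup W] [NormedSpace ℝ W]
    {f : V → W} {r d K : ℝ} (h : ScaledDerivBound m f z r (K * r ^ m)) (hr : 0 < r)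
    (hrd : r ≤ 2 * d) {i : ℕ} (hi : i ≤ m) :
    ‖iteratedFDeriv ℝ i f z‖ ≤ 2 ^ m * K * d ^ (m - i) := by
  have hK : 0 ≤ K := nonneg_of_mul_nonneg_left h.nonneg (by positivity)
  have hd : 0 ≤ d := by linarith
  have hle : r ^ i * ‖iteratedFDeriv ℝ i f z‖ ≤ r ^ i * (K * r ^ (m - i)) := by
    rw [mul_left_comm, pow_mul_pow_sub r hi]
    exact h i hi
  calc ‖iteratedFDeriv ℝ i f z‖ ≤ K * r ^ (m - i) := le_of_mul_le_mul_left hle (by positivity)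
    _ ≤ K * (2 * d) ^ (m - i) := by gcongr
    _ = 2 ^ (m - i) * K * d ^ (m - i) := by rw [mul_pow]; ring
    _ ≤ 2 ^ m * K * d ^ (m - i) := by
        gcongr
        · exact one_le_two
        · exact m.sub_le i

lemma norm_iteratedFDeriv_sub_le_of_tendsto_glue (hE : IsClosed E)
    (hp : IsNonnegWhitneyField m E p A)
    (h : ∀ k, IsLocalExtension m E p ((1 / 4) ^ k) B Λ (η k) (T k))
    (hF : ∀ w, Filter.Tendsto (fun k => glue η T k w) Filter.atTop (nhds (F w)))
    (hx : x ∈ E) (hz : z ∉ E) (hzx : ‖z - x‖ = Metric.infDist z E)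
    (hd : Metric.infDist z E ≤ 4 / 5) {i : ℕ} (hi : i ≤ m) :
    ‖iteratedFDeriv ℝ i (fun w => F w - p x w) z‖ ≤
      2 ^ m * ((8 ^ m * (1 + B) + 1) * Λ) * ‖z - x‖ ^ (m - i) := by
  obtain ⟨k, hk, hk'⟩ := exists_pow_scale ((hE.notMem_iff_infDist_pos ⟨x, hx⟩).mp hz) hd
  have hbound := scaledDerivBound_sub_of_tendsto_glue hp h hF hk hk' hx (hzx ▸ hk'.le)
  refine hbound.norm_le_of_le_two_mul (by positivity) ?_ hi
  have hscale : (1 / 4 : ℝ) ^ (k + 1) = 4 * (1 / 4) ^ (k + 2) := by rw [pow_succ _ (k + 1)]; ring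
  have hpos : (0 : ℝ) < (1 / 4) ^ (k + 2) := by positivity
  linarith

lemma IsNonnegWhitneyField.norm_iteratedFDeriv_sub_le_of_nearest
    (hp : IsNonnegWhitneyField m E p A) (hF : ContDiffAt ℝ m F z) (hx : x ∈ E) (hy : y ∈ E)
    (hyx : ‖z - y‖ ≤ ‖z - x‖) {K : ℝ} (hK : 0 ≤ K) {i : ℕ} (hi : i ≤ m)
    (hbound : ‖iteratedFDeriv ℝ i (fun w => F w - p y w) z‖ ≤ K * ‖z - y‖ ^ (m - i)) :
    ‖iteratedFDeriv ℝ i (fun w => F w - p x w) z‖ ≤ (K + 2 ^ m * A) * ‖z - x‖ ^ (m - i) := by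
  have hA : 0 ≤ A := hp.const_nonneg ⟨x, hx⟩
  have him : (i : WithTop ℕ∞) ≤ m := by exact_mod_cast hi
  have hpx := (hp.contDiff x hx).contDiffAt (x := z)
  have hpy := (hp.contDiff y hy).contDiffAt (x := z)
  have hsplit : iteratedFDeriv ℝ i (fun w => F w - p x w) z =
      iteratedFDeriv ℝ i (fun w => F w - p y w) z +
        iteratedFDeriv ℝ i (fun w => p y w - p x w) z := by
    rw [← fun_iteratedFDeriv_add_apply ((hF.sub hpy).of_le him) ((hpy.sub hpx).of_le him)]
    simp only [sub_add_sub_cancel]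
  calc ‖iteratedFDeriv ℝ i (fun w => F w - p x w) z‖
      ≤ K * ‖z - y‖ ^ (m - i) + A * (‖z - y‖ + ‖z - x‖) ^ (m - i) := by
        rw [hsplit]
        exact norm_add_le_of_le hbound (hp.norm_sub_le y hy x hx z i hi)
    _ ≤ K * ‖z - x‖ ^ (m - i) + A * (2 * ‖z - x‖) ^ (m - i) := by
        gcongr
        linarith
    _ = (K + 2 ^ (m - i) * A) * ‖z - x‖ ^ (m - i) := by
        rw [mul_pow]
        ring
    _ ≤ (K + 2 ^ m * A) * ‖z - x‖ ^ (m - i) := by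
        gcongr
        · exact one_le_two
        · exact m.sub_le i

lemma IsNonnegWhitneyField.norm_iteratedFDeriv_le_of_norm_sub_le
    (hp : IsNonnegWhitneyField m E p A) (hF : ContDiffAt ℝ m F z) (hx : x ∈ E) (hzx : ‖z - x‖ ≤ 1)
    {K : ℝ} (hK : 0 ≤ K) {i : ℕ} (hi : i ≤ m)
    (hbound : ‖iteratedFDeriv ℝ i (fun w => F w - p x w) z‖ ≤ K * ‖z - x‖ ^ (m - i)) :
    ‖iteratedFDeriv ℝ i F z‖ ≤ K + 2 ^ m * A := by
  have hA : 0 ≤ A := hp.const_nonneg ⟨x, hx⟩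
  have him : (i : WithTop ℕ∞) ≤ m := by exact_mod_cast hi
  have hpx := (hp.contDiff x hx).contDiffAt (x := z)
  have hsplit : iteratedFDeriv ℝ i F z =
      iteratedFDeriv ℝ i (fun w => F w - p x w) z + iteratedFDeriv ℝ i (p x) z := by
    rw [← fun_iteratedFDeriv_add_apply ((hF.sub hpx).of_le him) (hpx.of_le him)]
    simp only [sub_add_cancel]
  rw [hsplit]
  refine norm_add_le_of_le (hbound.trans ?_) ((hp.norm_le x hx z i hi).trans ?_)
  · exact mul_le_of_le_one_right hK (pow_le_one₀ (norm_nonneg _) hzx)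
  · rw [mul_comm]
    gcongr
    linarith

lemma IsLocalExtension.const_nonneg {r : ℝ} {η T : V → ℝ} (h : IsLocalExtension m E p r B Λ η T)
    (hr : 0 < r) (hne : E.Nonempty) : 0 ≤ Λ :=
  let ⟨x, hx⟩ := hne
  nonneg_of_mul_nonneg_left
    (h.scaledDerivBound_sub x hx x (by simpa using hr.le)).nonneg (pow_pos hr m)

lemma IsLocalExtension.norm_iteratedFDeriv_le [ProperSpace V] {η T : V → ℝ} (hE : IsClosed E)
    (hne : E.Nonempty) (hp : IsNonnegWhitneyField m E p A)
    (h : IsLocalExtension m E p 1 B Λ η T) (z : V) {i : ℕ} (hi : i ≤ m) :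
    ‖iteratedFDeriv ℝ i T z‖ ≤ Λ + 2 ^ m * (B * (4 ^ m * A)) := by
  have hA : 0 ≤ A := hp.const_nonneg hne
  suffices hbound : ScaledDerivBound m T z 1 (Λ + 2 ^ m * (B * (4 ^ m * A))) by
    simpa only [one_pow, one_mul] using hbound i hi
  obtain ⟨x, hx, hzx⟩ := hE.exists_infDist_eq_dist hne z
  rw [dist_eq_norm] at hzx
  rcases le_or_gt (Metric.infDist z E) 3 with hd | hd
  · have hpx : ScaledDerivBound m (p x) z 1 (4 ^ m * A) := fun j hj => by
      rw [one_pow, one_mul, mul_comm (4 ^ m)]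
      refine (hp.norm_le x hx z j hj).trans ?_
      gcongr
      linarith
    have hdiff := h.scaledDerivBound_sub x hx z (by linarith)
    rw [one_pow, mul_one] at hdiff
    have hcut := h.contDiff_cutoff.mul (hp.contDiff x hx)
    refine (ScaledDerivBound.add zero_le_one (h.contDiff.sub hcut) hcut hdiff
      (.mul zero_le_one h.contDiff_cutoff (hp.contDiff x hx)
        (h.scaledDerivBound_cutoff z) hpx)).congr (.of_eq ?_)
    simp only [sub_add_cancel]
  · have hΛ := h.const_nonneg one_pos hne
    have hB := h.cutoff_const_nonneg
    have hzero : T =ᶠ[nhds z] fun _ => 0 := by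
      filter_upwards [(Metric.continuous_infDist_pt E).continuousAt.eventually (lt_mem_nhds hd)]
        with w hw
      exact h.eq_zero w (by rwa [mul_one])
    exact ((ScaledDerivBound.const m (0 : ℝ) z 1).congr hzero).mono (by rw [norm_zero]; positivity)

/-- The constant of the Whitney construction, in terms of the bounds `B` and `Λ` for the local
extensions and the bound `A` for the field. -/
def whitneyConst (m : ℕ) (B Λ A : ℝ) : ℝ :=
  2 ^ m * ((8 ^ m * (1 + B) + 1) * Λ + (1 + 4 ^ m * B) * A)

lemma le_whitneyConst_of_near (hA : 0 ≤ A) (hB : 0 ≤ B) :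
    2 ^ m * ((8 ^ m * (1 + B) + 1) * Λ) + 2 ^ m * A ≤ whitneyConst m B Λ A := by
  have hpos : 0 ≤ 2 ^ m * (4 ^ m * B * A) := by positivity
  rw [whitneyConst]
  linarith

lemma le_whitneyConst_of_far (hA : 0 ≤ A) (hB : 0 ≤ B) (hΛ : 0 ≤ Λ) :
    Λ + 2 ^ m * (B * (4 ^ m * A)) ≤ whitneyConst m B Λ A := by
  have hpow : Λ ≤ 2 ^ m * Λ := le_mul_of_one_le_left hΛ (one_le_pow₀ one_le_two)
  have hpos : 0 ≤ 2 ^ m * (8 ^ m * (1 + B) * Λ + A) := by positivity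
  rw [whitneyConst]
  linarith

lemma le_whitneyConst (hA : 0 ≤ A) (hB : 0 ≤ B) (hΛ : 0 ≤ Λ) : A ≤ whitneyConst m B Λ A := by
  have hpow : A ≤ 2 ^ m * A := le_mul_of_one_le_left hA (one_le_pow₀ one_le_two)
  have hpos : 0 ≤ 2 ^ m * ((8 ^ m * (1 + B) + 1) * Λ) := by positivity
  exact le_trans (by linarith) (le_whitneyConst_of_near hA hB)

lemma isWhitneyExtensionOff_of_tendsto_glue [ProperSpace V] (hm : 0 < m) (hE : IsClosed E)
    (hne : E.Nonempty) (hp : IsNonnegWhitneyField m E p A)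
    (h : ∀ k, IsLocalExtension m E p ((1 / 4) ^ k) B Λ (η k) (T k))
    (hF : ∀ w, Filter.Tendsto (fun k => glue η T k w) Filter.atTop (nhds (F w))) :
    IsWhitneyExtensionOff m E p (whitneyConst m B Λ A) F := by
  have hdiff (z : V) (hz : z ∉ E) := contDiffAt_of_tendsto_glue hE hne h hF hz
  have h₀ : IsLocalExtension m E p 1 B Λ (η 0) (T 0) := by simpa only [pow_zero] using h 0
  have hA := hp.const_nonneg hne
  have hB := h₀.cutoff_const_nonneg
  have hΛ := h₀.const_nonneg one_pos hne
  have hK₀ : 0 ≤ 2 ^ m * ((8 ^ m * (1 + B) + 1) * Λ) := by positivity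
  refine ⟨fun x hx => tendsto_nhds_unique (hF x) (tendsto_glue_of_mem hm h hx), hdiff,
    fun x hx z hz hzx i hi => ?_, fun z hz i hi => ?_⟩ <;>
    obtain ⟨y, hy, hzy⟩ := hE.exists_infDist_eq_dist hne z <;>
    rw [dist_eq_norm] at hzy
  · have hyx : ‖z - y‖ ≤ ‖z - x‖ := by
      rw [← hzy, ← dist_eq_norm]
      exact Metric.infDist_le_dist_of_mem hx
    refine (hp.norm_iteratedFDeriv_sub_le_of_nearest (hdiff z hz) hx hy hyx hK₀ hi
      (norm_iteratedFDeriv_sub_le_of_tendsto_glue hE hp h hF hy hz hzy.symm (by linarith) hi)).trans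
      ?_
    gcongr
    exact le_whitneyConst_of_near hA hB
  · rcases le_or_gt (Metric.infDist z E) (4 / 5) with hd | hd
    · exact (hp.norm_iteratedFDeriv_le_of_norm_sub_le (hdiff z hz) hy (by linarith) hK₀ hi
        (norm_iteratedFDeriv_sub_le_of_tendsto_glue hE hp h hF hy hz hzy.symm hd hi)).trans
        (le_whitneyConst_of_near hA hB)
    · have heq := eventuallyEq_of_tendsto_glue_of_lt_infDist (z := z) h hF (by linarith)
      rw [(heq.iteratedFDeriv ℝ i).eq_of_nhds]
      exact (h₀.norm_iteratedFDeriv_le hE hne hp z hi).trans (le_whitneyConst_of_far hA hB hΛ)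

lemma exists_isWhitneyExtensionOff [ProperSpace V] (hm : 0 < m) (hE : IsClosed E)
    (hne : E.Nonempty) (hp : IsNonnegWhitneyField m E p A)
    (h : ∀ r > 0, ∃ η T, IsLocalExtension m E p r B Λ η T) :
    ∃ F : V → ℝ, (∀ z, 0 ≤ F z) ∧ IsWhitneyExtensionOff m E p (whitneyConst m B Λ A) F := by
  choose η T hT using fun k : ℕ => h ((1 / 4) ^ k) (by positivity)
  choose F hF using exists_tendsto_glue hm hE hne hT
  exact ⟨F, fun z => ge_of_tendsto' (hF z)
    (glue_nonneg (fun k => (hT k).cutoff_le_one z) fun k => (hT k).nonneg z),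
    isWhitneyExtensionOff_of_tendsto_glue hm hE hne hp hT hF⟩

end OffE

section Regularity

variable {V : Type*} [NormedAddCommGroup V] [NormedSpace ℝ V]

section Lipschitz

variable {W : Type*} [NormedAddCommGroup W]

lemma eventually_norm_sub_le_of_hasFDerivAt [NormedSpace ℝ W] {f : V → W} {f' : V →L[ℝ] W} {x : V}
    {r : ℝ} (hf : HasFDerivAt f f' x) (hr : ‖f'‖ < r) :
    ∀ᶠ z in nhds x, ‖f z - f x‖ ≤ r * ‖z - x‖ := by
  filter_upwards [hf.isLittleO.def (sub_pos.mpr hr)] with z hz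
  calc ‖f z - f x‖ = ‖(f z - f x - f' (z - x)) + f' (z - x)‖ := by rw [sub_add_cancel]
    _ ≤ (r - ‖f'‖) * ‖z - x‖ + ‖f'‖ * ‖z - x‖ := norm_add_le_of_le hz (f'.le_opNorm _)
    _ = r * ‖z - x‖ := by ring

lemma norm_sub_le_of_eventually_norm_sub_le {f : V → W} {C : ℝ} (hf : Continuous f)
    (h : ∀ x, ∀ r > C, ∀ᶠ z in nhds x, ‖f z - f x‖ ≤ r * ‖z - x‖) (a b : V) :
    ‖f b - f a‖ ≤ C * ‖b - a‖ := by
  rcases eq_or_ne a b with rfl | hab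
  · simp
  have hv : 0 < ‖b - a‖ := norm_pos_iff.mpr (sub_ne_zero.mpr hab.symm)
  have hline : Continuous fun t : ℝ => a + t • (b - a) := by fun_prop
  have hslope (t : ℝ) (r : ℝ) (hr : C * ‖b - a‖ < r) :
      ∀ᶠ s in nhdsWithin t (Set.Ioi t), slope (fun s => ‖f (a + s • (b - a)) - f a‖) t s < r := by
    obtain ⟨r', hCr', hr'⟩ := exists_between ((lt_div_iff₀ hv).mpr hr)
    filter_upwards [self_mem_nhdsWithin,
      (hline.continuousAt.eventually (h _ r' hCr')).filter_mono nhdsWithin_le_nhds] with s hts hs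
    have hts' : 0 < s - t := sub_pos.mpr hts
    rw [add_sub_add_left_eq_sub, ← sub_smul, norm_smul, Real.norm_of_nonneg hts'.le] at hs
    rw [slope_def_field, div_lt_iff₀ hts']
    calc ‖f (a + s • (b - a)) - f a‖ - ‖f (a + t • (b - a)) - f a‖
        ≤ ‖f (a + s • (b - a)) - f (a + t • (b - a))‖ := by
          simpa only [sub_sub_sub_cancel_right] using norm_sub_norm_le
            (f (a + s • (b - a)) - f a) (f (a + t • (b - a)) - f a)
      _ ≤ r' * ((s - t) * ‖b - a‖) := hs
      _ = r' * ‖b - a‖ * (s - t) := by ring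
      _ < r * (s - t) := mul_lt_mul_of_pos_right ((lt_div_iff₀ hv).mp hr') hts'
  have hle := image_le_of_liminf_slope_right_le_deriv_boundary (a := 0) (b := 1)
    (f := fun s => ‖f (a + s • (b - a)) - f a‖) (B := fun s => s * (C * ‖b - a‖))
    (by fun_prop) (by simp) (by fun_prop)
    (fun t _ => by simpa using (hasDerivWithinAt_id t (Set.Ici t)).mul_const (C * ‖b - a‖))
    (fun t _ r hr => (hslope t r hr).frequently) (Set.right_mem_Icc.mpr zero_le_one)
  simpa using hle

end Lipschitz

variable {m : ℕ} {E : Set V} {p : V → V → ℝ} {A K : ℝ} {F : V → ℝ} {x z : V}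

open Classical in
/-- The candidate for the Taylor series of `F`: its own off `E`, and that of `p x` at `x ∈ E`. -/
def patchedTaylorSeries (E : Set V) (p : V → V → ℝ) (F : V → ℝ) (z : V) :
    FormalMultilinearSeries ℝ V ℝ :=
  if z ∈ E then ftaylorSeries ℝ (p z) z else ftaylorSeries ℝ F z

lemma patchedTaylorSeries_of_mem (hz : z ∈ E) (i : ℕ) :
    patchedTaylorSeries E p F z i = iteratedFDeriv ℝ i (p z) z := by
  rw [patchedTaylorSeries, if_pos hz, ftaylorSeries]

lemma patchedTaylorSeries_of_notMem (hz : z ∉ E) (i : ℕ) :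
    patchedTaylorSeries E p F z i = iteratedFDeriv ℝ i F z := by
  rw [patchedTaylorSeries, if_neg hz, ftaylorSeries]

lemma eventually_patchedTaylorSeries_eq (hE : IsClosed E) (hz : z ∉ E) (i : ℕ) :
    (fun w => patchedTaylorSeries E p F w i) =ᶠ[nhds z] iteratedFDeriv ℝ i F :=
  Filter.mem_of_superset (hE.isOpen_compl.mem_nhds hz) fun _ hw =>
    patchedTaylorSeries_of_notMem hw i

namespace IsWhitneyExtensionOff

lemma norm_patchedTaylorSeries_le (hF : IsWhitneyExtensionOff m E p K F)
    (hp : IsNonnegWhitneyField m E p A) (hAK : A ≤ K) (z : V) {i : ℕ} (hi : i ≤ m) :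
    ‖patchedTaylorSeries E p F z i‖ ≤ K := by
  by_cases hz : z ∈ E
  · rw [patchedTaylorSeries_of_mem hz]
    exact (hp.norm_le z hz z i hi).trans (by simpa using hAK)
  · rw [patchedTaylorSeries_of_notMem hz]
    exact hF.norm_le z hz i hi

lemma norm_patchedTaylorSeries_sub_le (hF : IsWhitneyExtensionOff m E p K F)
    (hp : IsNonnegWhitneyField m E p A) (hAK : A ≤ K) (hx : x ∈ E) (hzx : ‖z - x‖ ≤ 1 / 2)
    {i : ℕ} (hi : i ≤ m) :
    ‖patchedTaylorSeries E p F z i - iteratedFDeriv ℝ i (p x) z‖ ≤ K * ‖z - x‖ ^ (m - i) := by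
  have him : (i : WithTop ℕ∞) ≤ m := by exact_mod_cast hi
  have hpx := (hp.contDiff x hx).contDiffAt.of_le (x := z) him
  by_cases hz : z ∈ E
  · rw [patchedTaylorSeries_of_mem hz, ← fun_iteratedFDeriv_sub_apply
      ((hp.contDiff z hz).contDiffAt.of_le him) hpx]
    refine (hp.norm_sub_le z hz x hx z i hi).trans ?_
    rw [sub_self, norm_zero, zero_add]
    gcongr
  · rw [patchedTaylorSeries_of_notMem hz, ← fun_iteratedFDeriv_sub_apply
      ((hF.contDiffAt z hz).of_le him) hpx]
    exact hF.norm_sub_le x hx z hz hzx i hi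

lemma isBigO_patchedTaylorSeries_sub (hF : IsWhitneyExtensionOff m E p K F)
    (hp : IsNonnegWhitneyField m E p A) (hAK : A ≤ K) (hx : x ∈ E) {i : ℕ} (hi : i ≤ m) :
    (fun z => patchedTaylorSeries E p F z i - iteratedFDeriv ℝ i (p x) z) =O[nhds x]
      fun z => ‖z - x‖ ^ (m - i) := by
  refine .of_bound K ?_
  filter_upwards [Metric.closedBall_mem_nhds x one_half_pos] with z hz
  rw [norm_pow, norm_norm]
  exact hF.norm_patchedTaylorSeries_sub_le hp hAK hx (mem_closedBall_iff_norm.mp hz) hi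

lemma hasFDerivAt_patchedTaylorSeries (hE : IsClosed E) (hF : IsWhitneyExtensionOff m E p K F)
    (hp : IsNonnegWhitneyField m E p A) (hAK : A ≤ K) {i : ℕ} (hi : i + 1 < m) (z : V) :
    HasFDerivAt (fun w => patchedTaylorSeries E p F w i)
      (patchedTaylorSeries E p F z (i + 1)).curryLeft z := by
  have him : (i : WithTop ℕ∞) < m := by exact_mod_cast (by omega)
  by_cases hz : z ∈ E
  · have hzero := (hF.isBigO_patchedTaylorSeries_sub hp hAK hz (by omega : i ≤ m)).hasFDerivAt
      (𝕜 := ℝ) (by omega)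
    have hpz := ((hp.contDiff z hz).differentiable_iteratedFDeriv him z).hasFDerivAt
    rw [fderiv_iteratedFDeriv] at hpz
    rw [patchedTaylorSeries_of_mem hz]
    have hsum := hzero.fun_add hpz
    simp only [sub_add_cancel, zero_add] at hsum
    exact hsum
  · rw [patchedTaylorSeries_of_notMem hz]
    have hdiff := (hF.contDiffAt z hz).differentiableAt_iteratedFDeriv him
    exact hdiff.hasFDerivAt.congr_of_eventuallyEq (eventually_patchedTaylorSeries_eq hE hz i)

lemma continuous_patchedTaylorSeries (hE : IsClosed E) (hF : IsWhitneyExtensionOff m E p K F)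
    (hp : IsNonnegWhitneyField m E p A) (hAK : A ≤ K) {i : ℕ} (hi : i < m) :
    Continuous fun z => patchedTaylorSeries E p F z i := continuous_iff_continuousAt.mpr fun z => by
  have him : (i : WithTop ℕ∞) < m := by exact_mod_cast hi
  by_cases hz : z ∈ E
  · have hpow : Filter.Tendsto (fun w => ‖w - z‖ ^ (m - i)) (nhds z) (nhds 0) := by
      have hcont : Continuous fun w => ‖w - z‖ ^ (m - i) := by fun_prop
      simpa [(Nat.sub_pos_of_lt hi).ne'] using hcont.tendsto z
    have hzero := (hF.isBigO_patchedTaylorSeries_sub hp hAK hz hi.le).trans_tendsto hpow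
    have hpz := ((hp.contDiff z hz).continuous_iteratedFDeriv him.le).tendsto z
    rw [ContinuousAt, patchedTaylorSeries_of_mem hz]
    simpa only [sub_add_cancel, zero_add] using hzero.add hpz
  · exact ((hF.contDiffAt z hz).differentiableAt_iteratedFDeriv him).continuousAt.congr
      (eventually_patchedTaylorSeries_eq hE hz i).symm

lemma hasFTaylorSeriesUpTo (hm : 0 < m) (hE : IsClosed E) (hF : IsWhitneyExtensionOff m E p K F)
    (hp : IsNonnegWhitneyField m E p A) (hAK : A ≤ K) :
    HasFTaylorSeriesUpTo (m - 1 : ℕ) F (patchedTaylorSeries E p F) where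
  zero_eq z := by
    by_cases hz : z ∈ E
    · rw [patchedTaylorSeries_of_mem hz, hF.eq_of_mem z hz]
      rfl
    · rw [patchedTaylorSeries_of_notMem hz]
      rfl
  fderiv i hi := hF.hasFDerivAt_patchedTaylorSeries hE hp hAK (by norm_cast at hi; omega)
  cont i hi := hF.continuous_patchedTaylorSeries hE hp hAK (by norm_cast at hi; omega)

lemma contDiff (hm : 0 < m) (hE : IsClosed E) (hF : IsWhitneyExtensionOff m E p K F)
    (hp : IsNonnegWhitneyField m E p A) (hAK : A ≤ K) : ContDiff ℝ (m - 1 : ℕ) F :=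
  (hF.hasFTaylorSeriesUpTo hm hE hp hAK).contDiff

lemma patchedTaylorSeries_eq (hm : 0 < m) (hE : IsClosed E) (hF : IsWhitneyExtensionOff m E p K F)
    (hp : IsNonnegWhitneyField m E p A) (hAK : A ≤ K) {i : ℕ} (hi : i ≤ m - 1) (z : V) :
    patchedTaylorSeries E p F z i = iteratedFDeriv ℝ i F z :=
  (hF.hasFTaylorSeriesUpTo hm hE hp hAK).eq_iteratedFDeriv (by exact_mod_cast hi) z

lemma iteratedFDeriv_eq (hm : 0 < m) (hE : IsClosed E) (hF : IsWhitneyExtensionOff m E p K F)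
    (hp : IsNonnegWhitneyField m E p A) (hAK : A ≤ K) {i : ℕ} (hi : i ≤ m - 1) (hx : x ∈ E) :
    iteratedFDeriv ℝ i F x = iteratedFDeriv ℝ i (p x) x := by
  rw [← hF.patchedTaylorSeries_eq hm hE hp hAK hi, patchedTaylorSeries_of_mem hx]

lemma norm_iteratedFDeriv_le (hm : 0 < m) (hE : IsClosed E) (hF : IsWhitneyExtensionOff m E p K F)
    (hp : IsNonnegWhitneyField m E p A) (hAK : A ≤ K) {i : ℕ} (hi : i ≤ m - 1) (z : V) :
    ‖iteratedFDeriv ℝ i F z‖ ≤ K := by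
  rw [← hF.patchedTaylorSeries_eq hm hE hp hAK hi]
  exact hF.norm_patchedTaylorSeries_le hp hAK z (hi.trans (m.sub_le 1))

lemma norm_iteratedFDeriv_sub_le_of_mem (hm : 0 < m) (hE : IsClosed E)
    (hF : IsWhitneyExtensionOff m E p K F) (hp : IsNonnegWhitneyField m E p A) (hAK : A ≤ K)
    (hx : x ∈ E) (hzx : ‖z - x‖ ≤ 1 / 2) :
    ‖iteratedFDeriv ℝ (m - 1) F z - iteratedFDeriv ℝ (m - 1) (p x) z‖ ≤ K * ‖z - x‖ := by
  have h := hF.norm_patchedTaylorSeries_sub_le hp hAK hx hzx (m.sub_le 1)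
  rwa [hF.patchedTaylorSeries_eq hm hE hp hAK le_rfl, Nat.sub_sub_self hm, pow_one] at h

lemma eventually_norm_iteratedFDeriv_sub_le (hm : 0 < m) (hE : IsClosed E)
    (hF : IsWhitneyExtensionOff m E p K F) (hp : IsNonnegWhitneyField m E p A) (hAK : A ≤ K)
    (x : V) {r : ℝ} (hr : 2 * K < r) :
    ∀ᶠ z in nhds x, ‖iteratedFDeriv ℝ (m - 1) F z - iteratedFDeriv ℝ (m - 1) F x‖ ≤
      r * ‖z - x‖ := by
  have hK : 0 ≤ K := (norm_nonneg _).trans (hF.norm_iteratedFDeriv_le hm hE hp hAK m.pred.zero_le x)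
  have hlt : ((m - 1 : ℕ) : WithTop ℕ∞) < m := by exact_mod_cast (by omega)
  have htop {f : V → ℝ} (hf : ‖iteratedFDeriv ℝ m f x‖ ≤ K) :
      ‖fderiv ℝ (iteratedFDeriv ℝ (m - 1) f) x‖ ≤ K := by
    rwa [norm_fderiv_iteratedFDeriv, Nat.sub_add_cancel hm]
  by_cases hx : x ∈ E
  · have hpx := eventually_norm_sub_le_of_hasFDerivAt
      ((hp.contDiff x hx).differentiable_iteratedFDeriv hlt x).hasFDerivAt (r := r - K)
      ((htop ((hp.norm_le x hx x m le_rfl).trans (by simpa using hAK))).trans_lt (by linarith))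
    filter_upwards [hpx, Metric.closedBall_mem_nhds x one_half_pos] with z hz hzx
    rw [hF.iteratedFDeriv_eq hm hE hp hAK le_rfl hx]
    calc _ ≤ K * ‖z - x‖ + (r - K) * ‖z - x‖ := norm_sub_le_norm_sub_add_norm_sub _ _ _ |>.trans
          (add_le_add (hF.norm_iteratedFDeriv_sub_le_of_mem hm hE hp hAK hx
            (mem_closedBall_iff_norm.mp hzx)) hz)
      _ = r * ‖z - x‖ := by ring
  · exact eventually_norm_sub_le_of_hasFDerivAt
      ((hF.contDiffAt x hx).differentiableAt_iteratedFDeriv hlt).hasFDerivAt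
      ((htop (hF.norm_le x hx m le_rfl)).trans_lt (by linarith))

lemma norm_iteratedFDeriv_sub_le (hm : 0 < m) (hE : IsClosed E)
    (hF : IsWhitneyExtensionOff m E p K F) (hp : IsNonnegWhitneyField m E p A) (hAK : A ≤ K)
    (x y : V) :
    ‖iteratedFDeriv ℝ (m - 1) F x - iteratedFDeriv ℝ (m - 1) F y‖ ≤ 2 * K * ‖x - y‖ :=
  norm_sub_le_of_eventually_norm_sub_le
    ((hF.contDiff hm hE hp hAK).continuous_iteratedFDeriv le_rfl)
    (fun _ _ hr => hF.eventually_norm_iteratedFDeriv_sub_le hm hE hp hAK _ hr) y x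

end IsWhitneyExtensionOff

end Regularity

section Extension

variable {m n : ℕ}

lemma whitneyConst_mul (m : ℕ) (B Λ A M : ℝ) :
    whitneyConst m B (Λ * M) (A * M) = whitneyConst m B Λ A * M := by
  simp only [whitneyConst]
  ring

lemma exists_isWhitneyExtensionOff_of_isNonnegWhitneyField (hm : 0 < m) (n : ℕ) :
    ∃ C : ℝ, 1 ≤ C ∧ ∀ (E : Set (Euc n)) (p : Euc n → Euc n → ℝ) (A : ℝ), IsClosed E →
      E.Nonempty → IsNonnegWhitneyField m E p A →
        ∃ F : Euc n → ℝ, (∀ z, 0 ≤ F z) ∧ IsWhitneyExtensionOff m E p (C * A) F := by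
  obtain ⟨B, hpart⟩ := exists_isPartitionAtScale n m
  have hB : 0 ≤ B := let ⟨_, _, hφ⟩ := hpart 1 one_pos; (hφ.scaledDerivBound 0 0).nonneg
  refine ⟨whitneyConst m (3 ^ n * (2 ^ m * B)) (3 ^ n * (2 ^ m * (B * (7 ^ m + 3 ^ m)))) 1,
    le_whitneyConst zero_le_one (by positivity) (by positivity), fun E p A hE hne hp => ?_⟩
  rw [← whitneyConst_mul, one_mul]
  refine exists_isWhitneyExtensionOff hm hE hne hp fun r hr => ?_
  obtain ⟨c, φ, hφ⟩ := hpart r hr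
  simpa only [Nat.cast_pow, Nat.cast_ofNat, mul_assoc] using exists_isLocalExtension hE hne hp hφ

lemma cmLipNormLe_zero {M : ℝ} (hM : 0 ≤ M) : CmLipNormLe m n 0 M :=
  cmLipNormLe_of_norm_iteratedFDeriv_le contDiff_zero_fun
    (fun i _ z => by simpa [iteratedFDeriv_fun_zero] using hM)
    (fun x y => by simpa [iteratedFDeriv_fun_zero] using mul_nonneg hM (norm_nonneg _))

lemma IsWhitneyExtensionOff.cmLipNormLe {E : Set (Euc n)} {p : Euc n → Euc n → ℝ} {A K : ℝ}
    {F : Euc n → ℝ} (hm : 0 < m) (hE : IsClosed E) (hF : IsWhitneyExtensionOff m E p K F)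
    (hp : IsNonnegWhitneyField m E p A) (hAK : A ≤ K) : CmLipNormLe m n F (2 * K) :=
  cmLipNormLe_of_norm_iteratedFDeriv_le (hF.contDiff hm hE hp hAK)
    (fun _ hi z => (hF.norm_iteratedFDeriv_le hm hE hp hAK hi z).trans (by
      linarith [(norm_nonneg _).trans (hF.norm_iteratedFDeriv_le hm hE hp hAK hi z)]))
    (hF.norm_iteratedFDeriv_sub_le hm hE hp hAK)

lemma IsWhitneyExtensionOff.isJetAt {E : Set (Euc n)} {P : Euc n → MPoly n} {A K : ℝ}
    {F : Euc n → ℝ} {x : Euc n} (hm : 0 < m) (hE : IsClosed E)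
    (hF : IsWhitneyExtensionOff m E (fun x => peval (P x)) K F)
    (hp : IsNonnegWhitneyField m E (fun x => peval (P x)) A) (hAK : A ≤ K) (hx : x ∈ E)
    (hdeg : (P x).totalDegree ≤ m - 1) : IsJetAt m n F x (P x) :=
  ⟨hdeg, fun α hα => mD_eq_of_iteratedFDeriv_eq (contDiff_peval _ _)
    ((hF.contDiff hm hE hp hAK).of_le (by exact_mod_cast hα))
    (hF.iteratedFDeriv_eq hm hE hp hAK hα hx).symm⟩

theorem whitney_extension_nonneg_Cm11_general (m n : ℕ) (hm : 0 < m) :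
    ∃ C : ℝ, 0 < C ∧
      ∀ (E : Set (Euc n)), IsClosed E → ∀ P : Euc n → MPoly n, ∀ M : ℝ, 0 ≤ M →
        (∀ x ∈ E, P x ∈ GammaStar' m n x M) →
        (∀ x ∈ E, ∀ y ∈ E, ∀ β : Fin n → ℕ, deg β ≤ m - 1 →
          |mD β (peval (P x - P y)) x| ≤ M * ‖x - y‖ ^ (m - deg β)) →
        ∃ F : Euc n → ℝ, CmLipNormLe m n F (C * M) ∧ (∀ y, 0 ≤ F y) ∧
          ∀ x ∈ E, IsJetAt m n F x (P x) := by
  obtain ⟨C, hC, hext⟩ := exists_isWhitneyExtensionOff_of_isNonnegWhitneyField hm n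
  refine ⟨2 * (C * (2 * (n + 1)) ^ m), by positivity, fun E hE P M hM hP hcompat => ?_⟩
  rcases E.eq_empty_or_nonempty with rfl | hne
  · exact ⟨0, cmLipNormLe_zero (by positivity), fun _ => le_rfl, fun x hx => hx.elim⟩
  have hp := isNonnegWhitneyField_peval hm hM hP hcompat
  obtain ⟨F, hF0, hF⟩ := hext E _ _ hE hne hp
  have hAK := le_mul_of_one_le_left (hp.const_nonneg hne) hC
  refine ⟨F, ?_, hF0, fun x hx => ?_⟩
  · simpa only [mul_assoc] using hF.cmLipNormLe hm hE hp hAK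
  · obtain ⟨_, -, -, hjet⟩ := hP x hx
    exact hF.isJetAt hm hE hp hAK hx hjet.1

end Extension

/-- **Lemma 4.2**: Whitney extension keeping nonnegativity, `C^{m-1,1}` version. -/
theorem whitney_extension_nonneg_Cm11 (m n : ℕ) (hm : 0 < m) (hn : 0 < n) :
    ∃ C : ℝ, 0 < C ∧
      ∀ (E : Set (Euc n)), E.Finite → ∀ P : Euc n → MPoly n, ∀ M : ℝ, 0 < M →
        (∀ x ∈ E, MvPolynomial.totalDegree (P x) ≤ m - 1) →
        (∀ x ∈ E, P x ∈ GammaStar' m n x M) →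
        (∀ x ∈ E, ∀ y ∈ E, ∀ β : Fin n → ℕ, deg β ≤ m - 1 →
          |mD β (peval (P x - P y)) x| ≤ M * ‖x - y‖ ^ (m - deg β)) →
        ∃ F : Euc n → ℝ, CmLipNormLe m n F (C * M) ∧ (∀ y, 0 ≤ F y) ∧
          ∀ x ∈ E, IsJetAt m n F x (P x) := by
  obtain ⟨C, hC, hext⟩ := whitney_extension_nonneg_Cm11_general m n hm
  exact ⟨C, hC, fun E hE P M hM _ => hext E hE.isClosed P M hM.le⟩

end
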